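/- arXiv:2605.13882 — 3 statements merged into one kernel-verified Lean document; each statement's English description precedes it below -/
import Mathlib

section
/- The integral R_C(0, 2) = ∫_0^∞ cos(2πx)/(exp(2π√x) − 1) dx converges and equals 1/16. -/
open MeasureTheory Real Set

noncomputable def rphi : ℂ → ℂ := dslope Complex.exp 0
noncomputable def rpsi : ℂ → ℂ := dslope Complex.sinh 0

lemma differentiable_dslope' {f : ℂ → ℂ} (hf : Differentiable ℂ f) (c : ℂ) :
    Differentiable ℂ (dslope f c) := by
  rw [← differentiableOn_univ] at *
  exact (Complex.differentiableOn_dslope Filter.univ_mem).2 hf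

lemma rphi_mul (u : ℂ) : u * rphi u = Complex.exp u - 1 := by
  have := sub_smul_dslope Complex.exp 0 u
  simpa [rphi] using this

lemma rpsi_mul (u : ℂ) : u * rpsi u = Complex.sinh u := by
  have := sub_smul_dslope Complex.sinh 0 u
  simpa [rpsi] using this

lemma rphi_zero : rphi 0 = 1 := by simp [rphi]
lemma rpsi_zero : rpsi 0 = 1 := by
  simp [rpsi]

@[fun_prop] lemma rphi_diff : Differentiable ℂ rphi := differentiable_dslope' Complex.differentiable_exp 0
@[fun_prop] lemma rpsi_diff : Differentiable ℂ rpsi := differentiable_dslope' Complex.differentiable_sinh 0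

lemma sinh_ne (z : ℂ) (hz : z ≠ 0) (h : |z.im| < 1) : Complex.sinh (π * z) ≠ 0 := by
  intro h0
  have h1 : Complex.sin (π * z * Complex.I) = 0 := by rw [Complex.sin_mul_I, h0, zero_mul]
  rw [Complex.sin_eq_zero_iff] at h1
  obtain ⟨k, hk⟩ := h1
  have hπ : (π : ℂ) ≠ 0 := by exact_mod_cast pi_ne_zero
  have h2 : z * Complex.I = k := by
    apply mul_left_cancel₀ hπ
    rw [← mul_assoc, hk]; ring
  have h3 : z = -(k * Complex.I) := by
    rw [← h2, mul_assoc, Complex.I_mul_I]; ring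
  have h4 : z.im = -k := by rw [h3]; simp
  rw [h4, abs_neg] at h
  have h5 : |k| < 1 := by exact_mod_cast h
  have h6 : k = 0 := Int.abs_lt_one_iff.1 h5
  apply hz; rw [h3, h6]; simp

lemma rpsi_ne (z : ℂ) (h : |z.im| < 1) : rpsi (π * z) ≠ 0 := by
  by_cases hz : z = 0
  · simp [hz, rpsi_zero]
  · intro h0
    apply sinh_ne z hz h
    rw [← rpsi_mul, h0, mul_zero]

lemma cosh_eq_sinh (z : ℂ) : Complex.cosh (π * z) = Complex.I * Complex.sinh (π * (z - Complex.I / 2)) := by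
  have : (π : ℂ) * (z - Complex.I / 2) = π * z - (π / 2 : ℂ) * Complex.I := by ring
  rw [this, Complex.sinh_sub, Complex.cosh_mul_I, Complex.sinh_mul_I]
  simp
  linear_combination Complex.cosh (π * z) * Complex.I_sq

noncomputable def rT (z : ℂ) : ℂ :=
  (Complex.I / (2 * π)) * (rphi (2 * π * Complex.I * z ^ 2) * Complex.exp (2 * (π * z))
    - 2 * rpsi (π * z) * Complex.cosh (π * z) + Complex.cosh (π * z) ^ 2 * rpsi (π * z) ^ 2)
  - ((1 + Complex.I) / 4) * Complex.sinh (π * z) ^ 2 * rpsi (π * z) ^ 2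

lemma rT_diff : Differentiable ℂ rT := by
  have h1 : Differentiable ℂ fun z : ℂ => rphi (2 * π * Complex.I * z ^ 2) :=
    rphi_diff.comp (by fun_prop)
  have h2 : Differentiable ℂ fun z : ℂ => rpsi (π * z) := rpsi_diff.comp (by fun_prop)
  unfold rT
  fun_prop

lemma rT_zero : rT 0 = 0 := by
  simp [rT, rphi_zero, rpsi_zero]; norm_num

lemma rT_half : rT (Complex.I / 2) = 0 := by
  have hπ : (π : ℂ) ≠ 0 := by exact_mod_cast pi_ne_zero
  have hI := Complex.I_ne_zero
  have e0 : (π : ℂ) * (Complex.I / 2) = (π / 2 : ℂ) * Complex.I := by ring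
  have hc : Complex.cosh (π * (Complex.I / 2)) = 0 := by
    rw [e0, Complex.cosh_mul_I]; simp
  have hs : Complex.sinh (π * (Complex.I / 2)) = Complex.I := by
    rw [e0, Complex.sinh_mul_I]; simp
  have hp : rpsi (π * (Complex.I / 2)) = 2 / π := by
    have := rpsi_mul (π * (Complex.I / 2))
    rw [hs] at this
    have h2 : (π * (Complex.I / 2)) ≠ 0 := by simp [pi_ne_zero]
    apply mul_left_cancel₀ h2
    rw [this]; field_simp
  have hq : Complex.exp (2 * (π * (Complex.I / 2))) = -1 := by
    rw [← Complex.exp_pi_mul_I]; congr 1; ring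
  have hh : rphi (2 * π * Complex.I * (Complex.I / 2) ^ 2) = 2 * (1 - Complex.I) / π := by
    have e1 : 2 * π * Complex.I * (Complex.I / 2) ^ 2 = -((π / 2 : ℂ) * Complex.I) := by
      rw [div_pow, Complex.I_sq]; ring
    rw [e1]
    have := rphi_mul (-((π / 2 : ℂ) * Complex.I))
    rw [Complex.exp_neg, Complex.exp_pi_div_two_mul_I] at this
    have h2 : -((π / 2 : ℂ) * Complex.I) ≠ 0 := by simp [pi_ne_zero]
    apply mul_left_cancel₀ h2
    rw [this, Complex.inv_I]; field_simp
    linear_combination (-1) * Complex.I_sq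
  rw [rT, hc, hs, hp, hq, hh, Complex.I_sq]
  field_simp
  linear_combination 4 * π * Complex.I_sq

noncomputable def rT2 : ℂ → ℂ := dslope (dslope rT 0) (Complex.I / 2)

lemma rT2_diff : Differentiable ℂ rT2 :=
  differentiable_dslope' (differentiable_dslope' rT_diff 0) _

lemma rT2_mul (z : ℂ) : z * (z - Complex.I / 2) * rT2 z = rT z := by
  have h1 : ∀ z, z * dslope rT 0 z = rT z := by
    intro z
    have := sub_smul_dslope rT 0 z
    simpa [rT_zero] using this
  have h2 := sub_smul_dslope (dslope rT 0) (Complex.I / 2) z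
  have h3 : dslope rT 0 (Complex.I / 2) = 0 := by
    have := h1 (Complex.I / 2)
    rw [rT_half] at this
    simpa using this
  rw [h3, sub_zero, smul_eq_mul] at h2
  rw [mul_assoc, rT2, h2, h1]

noncomputable def rH (z : ℂ) : ℂ :=
  rT2 z / (rpsi (π * z) ^ 3 * π * (Complex.I * π * rpsi (π * (z - Complex.I / 2))))

lemma rH_diff (z : ℂ) (h0 : 0 ≤ z.im) (h1 : z.im ≤ 1 / 2) : DifferentiableAt ℂ rH z := by
  have hd : Differentiable ℂ fun z : ℂ => rpsi (π * z) := rpsi_diff.comp (by fun_prop)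
  have hd' : Differentiable ℂ fun z : ℂ => rpsi (π * (z - Complex.I / 2)) := rpsi_diff.comp (by fun_prop)
  have hT := rT2_diff
  have hn := rpsi_ne z (by rw [abs_lt]; constructor <;> linarith)
  have hn' := rpsi_ne (z - Complex.I / 2) (by
    simp; rw [abs_lt]; constructor <;> linarith)
  unfold rH
  refine DifferentiableAt.div hT.differentiableAt (by fun_prop) ?_
  simp [hn, hn', pi_ne_zero]

noncomputable def rF (z : ℂ) : ℂ :=
  (Complex.exp (2 * π * Complex.I * z ^ 2) - 1) * Complex.exp (2 * (π * z)) /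
    (4 * Complex.sinh (π * z) ^ 3 * Complex.cosh (π * z))
  - Complex.I * z / Complex.sinh (π * z) ^ 2
  + Complex.I / (2 * π) * (Complex.cosh (π * z) / Complex.sinh (π * z))
  - (1 + Complex.I) / 4 * (Complex.sinh (π * z) / Complex.cosh (π * z))

lemma rH_eq (z : ℂ) (h0 : 0 ≤ z.im) (h1 : z.im ≤ 1 / 2) (hz : z ≠ 0) (hz' : z ≠ Complex.I / 2) :
    rH z = rF z := by
  have hπ : (π : ℂ) ≠ 0 := by exact_mod_cast pi_ne_zero
  have hI := Complex.I_ne_zero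
  have hn := rpsi_ne z (by rw [abs_lt]; constructor <;> linarith)
  have hn' := rpsi_ne (z - Complex.I / 2) (by
    simp; rw [abs_lt]; constructor <;> linarith)
  have hw : z - Complex.I / 2 ≠ 0 := sub_ne_zero.2 hz'
  have hT := rT2_mul z
  have hs : Complex.sinh (π * z) = π * z * rpsi (π * z) := (rpsi_mul _).symm
  have hc : Complex.cosh (π * z) = Complex.I * (π * (z - Complex.I / 2) * rpsi (π * (z - Complex.I / 2))) := by
    rw [cosh_eq_sinh, rpsi_mul]
  have he := rphi_mul (2 * π * Complex.I * z ^ 2)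
  have hH : rH z = rT z / (rpsi (π * z) ^ 2 * Complex.cosh (π * z) * Complex.sinh (π * z)) := by
    rw [← hT, hc, hs, rH]
    revert hn' hw
    generalize z - Complex.I / 2 = w
    intro hn' hw
    field_simp
  have hcn : Complex.cosh (π * z) ≠ 0 := by
    rw [hc]; simp [pi_ne_zero, hn', hw]
  rw [hH, rF, rT, ← he, hs]
  field_simp
  ring

lemma rF_add_neg (z : ℂ) (hs : Complex.sinh (π * z) ≠ 0) (hc : Complex.cosh (π * z) ≠ 0) :
    rF z + rF (-z) = (Complex.exp (2 * π * Complex.I * z ^ 2) - 1) / Complex.sinh (π * z) ^ 2 := by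
  have hπ : (π : ℂ) ≠ 0 := by exact_mod_cast pi_ne_zero
  have hq : Complex.exp (2 * (π * z)) = (Complex.cosh (π * z) + Complex.sinh (π * z)) ^ 2 := by
    rw [Complex.cosh_add_sinh, ← Complex.exp_nat_mul]; norm_num
  have hq' : Complex.exp (2 * (π * -z)) = (Complex.cosh (π * z) - Complex.sinh (π * z)) ^ 2 := by
    rw [Complex.cosh_sub_sinh, ← Complex.exp_nat_mul]; norm_num
  unfold rF
  rw [hq, hq', mul_neg, Complex.sinh_neg, Complex.cosh_neg, neg_sq z]
  field_simp
  ring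

lemma rF_half (x : ℂ) (hs : Complex.sinh (π * x) ≠ 0) (hc : Complex.cosh (π * x) ≠ 0) :
    rF (x + Complex.I / 2) + rF (-x + Complex.I / 2) = 0 := by
  have hπ : (π : ℂ) ≠ 0 := by exact_mod_cast pi_ne_zero
  have hI := Complex.I_ne_zero
  have key : ∀ x : ℂ, Complex.sinh (π * x) ≠ 0 → Complex.cosh (π * x) ≠ 0 →
      rF (x + Complex.I / 2) = (Complex.I * Complex.exp (2 * π * Complex.I * x ^ 2)
        + (Complex.cosh (π * x) + Complex.sinh (π * x)) ^ 2) /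
          (4 * Complex.cosh (π * x) ^ 3 * Complex.sinh (π * x))
        + (Complex.I * x - 1 / 2) / Complex.cosh (π * x) ^ 2
        + Complex.I / (2 * π) * (Complex.sinh (π * x) / Complex.cosh (π * x))
        - (1 + Complex.I) / 4 * (Complex.cosh (π * x) / Complex.sinh (π * x)) := by
    intro x hs hc
    have e0 : (π : ℂ) * (x + Complex.I / 2) = π * x + (π / 2 : ℂ) * Complex.I := by ring
    have h1 : Complex.sinh (π * (x + Complex.I / 2)) = Complex.I * Complex.cosh (π * x) := by
      rw [e0, Complex.sinh_add, Complex.cosh_mul_I, Complex.sinh_mul_I]; simp [mul_comm]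
    have h2 : Complex.cosh (π * (x + Complex.I / 2)) = Complex.I * Complex.sinh (π * x) := by
      rw [e0, Complex.cosh_add, Complex.cosh_mul_I, Complex.sinh_mul_I]; simp [mul_comm]
    have hq : Complex.exp (2 * (π * x)) = (Complex.cosh (π * x) + Complex.sinh (π * x)) ^ 2 := by
      rw [Complex.cosh_add_sinh, ← Complex.exp_nat_mul]; norm_num
    have h3 : Complex.exp (2 * (π * (x + Complex.I / 2))) = - Complex.exp (2 * (π * x)) := by
      have : (2 : ℂ) * (π * (x + Complex.I / 2)) = 2 * (π * x) + π * Complex.I := by ring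
      rw [this, Complex.exp_add, Complex.exp_pi_mul_I]; ring
    have h4 : Complex.exp (2 * π * Complex.I * (x + Complex.I / 2) ^ 2) * Complex.exp (2 * (π * x))
        = - Complex.I * Complex.exp (2 * π * Complex.I * x ^ 2) := by
      have : 2 * π * Complex.I * (x + Complex.I / 2) ^ 2 + 2 * (π * x)
          = 2 * π * Complex.I * x ^ 2 + (-((π / 2 : ℂ) * Complex.I)) := by
        linear_combination (2 * π * x + π / 2 * Complex.I) * Complex.I_sq
      rw [← Complex.exp_add, this, Complex.exp_add, Complex.exp_neg,
        Complex.exp_pi_div_two_mul_I, Complex.inv_I]; ring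
    have h5 : (Complex.exp (2 * π * Complex.I * (x + Complex.I / 2) ^ 2) - 1) *
        Complex.exp (2 * (π * (x + Complex.I / 2))) =
        Complex.I * Complex.exp (2 * π * Complex.I * x ^ 2)
        + (Complex.cosh (π * x) + Complex.sinh (π * x)) ^ 2 := by
      rw [h3, ← hq]; linear_combination (-1) * h4
    have hI3 : Complex.I ^ 3 = - Complex.I := by
      rw [pow_succ, Complex.I_sq]; ring
    unfold rF
    rw [h5, h1, h2]
    have e1 : 4 * (Complex.I * Complex.cosh (π * x)) ^ 3 * (Complex.I * Complex.sinh (π * x))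
        = 4 * Complex.cosh (π * x) ^ 3 * Complex.sinh (π * x) := by
      rw [mul_pow, hI3]
      linear_combination (-4) * Complex.cosh (π * x) ^ 3 * Complex.sinh (π * x) * Complex.I_sq
    have e2 : (Complex.I * Complex.cosh (π * x)) ^ 2 = - Complex.cosh (π * x) ^ 2 := by
      rw [mul_pow, Complex.I_sq]; ring
    rw [e1, e2, mul_div_mul_left _ _ hI, mul_div_mul_left _ _ hI]
    have e3 : Complex.I * (x + Complex.I / 2) = Complex.I * x - 1 / 2 := by
      linear_combination (1/2) * Complex.I_sq
    rw [e3, div_neg]; ring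
  rw [key x hs hc, key (-x) (by simpa using hs) (by simpa using hc)]
  rw [mul_neg, Complex.sinh_neg, Complex.cosh_neg, neg_sq x]
  field_simp
  ring

open Filter Topology

lemma rlim_aux {ι : Type*} {l : Filter ι} {v A B : ι → ℂ} (hv : Tendsto v l (𝓝 0))
    (hA : Tendsto A l (𝓝 0)) (hB : Tendsto B l (𝓝 0)) (s t : ℂ) :
    Tendsto (fun i => 4 * A i / ((1 - v i ^ 2) ^ 3 * (1 + v i ^ 2)) - 4 * Complex.I * B i / (1 - v i ^ 2) ^ 2
      + s * ((1 + v i ^ 2) / (1 - v i ^ 2)) - t * ((1 - v i ^ 2) / (1 + v i ^ 2))) l (𝓝 (s - t)) := by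
  have hf : ContinuousAt (fun p : ℂ × ℂ × ℂ => 4 * p.2.1 / ((1 - p.1 ^ 2) ^ 3 * (1 + p.1 ^ 2))
      - 4 * Complex.I * p.2.2 / (1 - p.1 ^ 2) ^ 2
      + s * ((1 + p.1 ^ 2) / (1 - p.1 ^ 2)) - t * ((1 - p.1 ^ 2) / (1 + p.1 ^ 2))) (0, 0, 0) := by
    fun_prop (disch := norm_num)
  have := hf.tendsto.comp (hv.prodMk_nhds (hA.prodMk_nhds hB))
  simpa [Function.comp_def] using this

lemma rF_right (z v : ℂ) (hv : v = Complex.exp (-(π * z))) (h1 : 1 - v ^ 2 ≠ 0) (h2 : 1 + v ^ 2 ≠ 0) :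
    rF z = 4 * ((Complex.exp (2 * π * Complex.I * z ^ 2) - 1) * v ^ 2) / ((1 - v ^ 2) ^ 3 * (1 + v ^ 2))
      - 4 * Complex.I * (z * v ^ 2) / (1 - v ^ 2) ^ 2
      + (Complex.I / (2 * π)) * ((1 + v ^ 2) / (1 - v ^ 2))
      - ((1 + Complex.I) / 4) * ((1 - v ^ 2) / (1 + v ^ 2)) := by
  have hπ : (π : ℂ) ≠ 0 := by exact_mod_cast pi_ne_zero
  have hv0 : v ≠ 0 := by rw [hv]; exact Complex.exp_ne_zero _
  have he : Complex.exp (π * z) = v⁻¹ := by rw [hv, Complex.exp_neg, inv_inv]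
  have hs : Complex.sinh (π * z) = (1 - v ^ 2) / (2 * v) := by
    rw [Complex.sinh, he, ← hv]; field_simp
  have hc : Complex.cosh (π * z) = (1 + v ^ 2) / (2 * v) := by
    rw [Complex.cosh, he, ← hv]; field_simp
  have hq : Complex.exp (2 * (π * z)) = (v ^ 2)⁻¹ := by
    rw [two_mul, Complex.exp_add, he]; field_simp
  unfold rF
  rw [hs, hc, hq]
  field_simp
  ring

lemma rF_left (z v : ℂ) (hv : v = Complex.exp (π * z)) (h1 : 1 - v ^ 2 ≠ 0) (h2 : 1 + v ^ 2 ≠ 0) :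
    rF z = 4 * (-(Complex.exp (2 * π * Complex.I * z ^ 2) - 1) * v ^ 6) / ((1 - v ^ 2) ^ 3 * (1 + v ^ 2))
      - 4 * Complex.I * (z * v ^ 2) / (1 - v ^ 2) ^ 2
      + (-(Complex.I / (2 * π))) * ((1 + v ^ 2) / (1 - v ^ 2))
      - (-((1 + Complex.I) / 4)) * ((1 - v ^ 2) / (1 + v ^ 2)) := by
  have hπ : (π : ℂ) ≠ 0 := by exact_mod_cast pi_ne_zero
  have hv0 : v ≠ 0 := by rw [hv]; exact Complex.exp_ne_zero _
  have he : Complex.exp (-(π * z)) = v⁻¹ := by rw [hv, Complex.exp_neg]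
  have hs : Complex.sinh (π * z) = -(1 - v ^ 2) / (2 * v) := by
    rw [Complex.sinh, he, ← hv]; field_simp; ring
  have hc : Complex.cosh (π * z) = (1 + v ^ 2) / (2 * v) := by
    rw [Complex.cosh, he, ← hv]; field_simp; ring
  have hq : Complex.exp (2 * (π * z)) = v ^ 2 := by
    rw [two_mul, Complex.exp_add, ← hv]; ring
  unfold rF
  rw [hs, hc, hq]
  field_simp
  ring

noncomputable def rfil : Filter (ℝ × ℝ) := atTop ×ˢ 𝓟 (Icc (0:ℝ) (1/2))

lemma rfil_ev : ∀ᶠ p : ℝ × ℝ in rfil, 0 ≤ p.1 ∧ 0 ≤ p.2 ∧ p.2 ≤ 1 / 2 := by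
  have h1 : ∀ᶠ p : ℝ × ℝ in rfil, 0 ≤ p.1 := tendsto_fst.eventually (eventually_ge_atTop (0:ℝ))
  have h2 : ∀ᶠ p : ℝ × ℝ in rfil, p.2 ∈ Icc (0:ℝ) (1/2) :=
    tendsto_snd.eventually (eventually_mem_set.2 (mem_principal_self _))
  filter_upwards [h1, h2] with p a b
  exact ⟨a, b.1, b.2⟩

lemma rfil_exp : Tendsto (fun p : ℝ × ℝ => Real.exp (-p.1)) rfil (𝓝 0) :=
  (Real.tendsto_exp_neg_atTop_nhds_zero).comp tendsto_fst

lemma rfil_exp1 : Tendsto (fun p : ℝ × ℝ => (p.1 + 1) * Real.exp (-p.1)) rfil (𝓝 0) := by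
  have h : Tendsto (fun x : ℝ => (x + 1) * Real.exp (-x)) atTop (𝓝 0) := by
    have := (Real.tendsto_pow_mul_exp_neg_atTop_nhds_zero 1).add Real.tendsto_exp_neg_atTop_nhds_zero
    simp only [add_zero, pow_one] at this
    refine this.congr (fun x => by ring)
  exact h.comp tendsto_fst

lemma rF_tendsto_right : Tendsto (fun p : ℝ × ℝ => rF (p.1 + p.2 * Complex.I)) rfil
    (𝓝 (Complex.I / (2 * π) - (1 + Complex.I) / 4)) := by
  have hv : Tendsto (fun p : ℝ × ℝ => Complex.exp (-(π * (p.1 + p.2 * Complex.I)))) rfil (𝓝 0) := by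
    refine squeeze_zero_norm' ?_ rfil_exp
    filter_upwards [rfil_ev] with p hp
    rw [Complex.norm_exp, Real.exp_le_exp]
    simp
    nlinarith [Real.pi_gt_three]
  have hE : Tendsto (fun p : ℝ × ℝ => Complex.exp (2 * π * Complex.I * (p.1 + p.2 * Complex.I) ^ 2) *
      Complex.exp (-(π * (p.1 + p.2 * Complex.I))) ^ 2) rfil (𝓝 0) := by
    refine squeeze_zero_norm' ?_ rfil_exp
    filter_upwards [rfil_ev] with p hp
    rw [← Complex.exp_nat_mul, ← Complex.exp_add, Complex.norm_exp, Real.exp_le_exp]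
    simp [pow_two]
    have := mul_nonneg hp.1 hp.2.1
    nlinarith [Real.pi_gt_three, mul_nonneg Real.pi_pos.le this]
  have hA : Tendsto (fun p : ℝ × ℝ => (Complex.exp (2 * π * Complex.I * (p.1 + p.2 * Complex.I) ^ 2) - 1) *
      Complex.exp (-(π * (p.1 + p.2 * Complex.I))) ^ 2) rfil (𝓝 0) := by
    have := hE.sub (hv.pow 2)
    simp only [ne_eq, OfNat.ofNat_ne_zero, not_false_eq_true, zero_pow, sub_zero] at this
    refine this.congr (fun p => by ring)
  have hB : Tendsto (fun p : ℝ × ℝ => ((p.1 + p.2 * Complex.I) : ℂ) *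
      Complex.exp (-(π * (p.1 + p.2 * Complex.I))) ^ 2) rfil (𝓝 0) := by
    refine squeeze_zero_norm' ?_ rfil_exp1
    filter_upwards [rfil_ev] with p hp
    rw [← Complex.exp_nat_mul, norm_mul, Complex.norm_exp]
    gcongr
    · linarith [hp.1]
    · refine (norm_add_le _ _).trans ?_
      simp
      rw [abs_of_nonneg hp.1, abs_of_nonneg hp.2.1]
      linarith [hp.2.2]
    · simp
      nlinarith [Real.pi_gt_three]
  refine (rlim_aux hv hA hB _ _).congr' ?_
  have h2 : Tendsto (fun p : ℝ × ℝ => Complex.exp (-(π * (p.1 + p.2 * Complex.I))) ^ 2) rfil (𝓝 0) := by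
    simpa using hv.pow 2
  have h3 := h2.eventually_ne (show (0:ℂ) ≠ 1 by norm_num)
  have h4 := h2.eventually_ne (show (0:ℂ) ≠ -1 by norm_num)
  filter_upwards [h3, h4] with p a b
  rw [rF_right _ _ (Eq.refl _) (fun h => a (sub_eq_zero.1 h).symm) (fun h => b (eq_neg_of_add_eq_zero_right h))]

lemma rF_tendsto_left : Tendsto (fun p : ℝ × ℝ => rF (((-p.1 : ℝ) : ℂ) + p.2 * Complex.I)) rfil
    (𝓝 (-(Complex.I / (2 * π)) - -((1 + Complex.I) / 4))) := by
  have hv : Tendsto (fun p : ℝ × ℝ => Complex.exp ((π * (((-p.1 : ℝ) : ℂ) + p.2 * Complex.I)))) rfil (𝓝 0) := by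
    refine squeeze_zero_norm' ?_ rfil_exp
    filter_upwards [rfil_ev] with p hp
    rw [Complex.norm_exp, Real.exp_le_exp]
    simp
    nlinarith [Real.pi_gt_three]
  have hE : Tendsto (fun p : ℝ × ℝ => Complex.exp (2 * π * Complex.I * (((-p.1 : ℝ) : ℂ) + p.2 * Complex.I) ^ 2) *
      Complex.exp ((π * (((-p.1 : ℝ) : ℂ) + p.2 * Complex.I))) ^ 6) rfil (𝓝 0) := by
    refine squeeze_zero_norm' ?_ rfil_exp
    filter_upwards [rfil_ev] with p hp
    rw [← Complex.exp_nat_mul, ← Complex.exp_add, Complex.norm_exp, Real.exp_le_exp]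
    simp [pow_two]
    have := mul_nonneg hp.1 (sub_nonneg.2 hp.2.2)
    nlinarith [Real.pi_gt_three, mul_nonneg Real.pi_pos.le this]
  have hA : Tendsto (fun p : ℝ × ℝ => -(Complex.exp (2 * π * Complex.I * (((-p.1 : ℝ) : ℂ) + p.2 * Complex.I) ^ 2) - 1) *
      Complex.exp ((π * (((-p.1 : ℝ) : ℂ) + p.2 * Complex.I))) ^ 6) rfil (𝓝 0) := by
    have := (hv.pow 6).sub hE
    simp only [ne_eq, OfNat.ofNat_ne_zero, not_false_eq_true, zero_pow, sub_zero] at this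
    refine this.congr (fun p => by ring)
  have hB : Tendsto (fun p : ℝ × ℝ => ((((-p.1 : ℝ) : ℂ) + p.2 * Complex.I) : ℂ) *
      Complex.exp ((π * (((-p.1 : ℝ) : ℂ) + p.2 * Complex.I))) ^ 2) rfil (𝓝 0) := by
    refine squeeze_zero_norm' ?_ rfil_exp1
    filter_upwards [rfil_ev] with p hp
    rw [← Complex.exp_nat_mul, norm_mul, Complex.norm_exp]
    gcongr
    · linarith [hp.1]
    · refine (norm_add_le _ _).trans ?_
      simp
      rw [abs_of_nonneg hp.1, abs_of_nonneg hp.2.1]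
      linarith [hp.2.2]
    · simp
      nlinarith [Real.pi_gt_three]
  refine (rlim_aux hv hA hB _ _).congr' ?_
  have h2 : Tendsto (fun p : ℝ × ℝ => Complex.exp ((π * (((-p.1 : ℝ) : ℂ) + p.2 * Complex.I))) ^ 2) rfil (𝓝 0) := by
    simpa using hv.pow 2
  have h3 := h2.eventually_ne (show (0:ℂ) ≠ 1 by norm_num)
  have h4 := h2.eventually_ne (show (0:ℂ) ≠ -1 by norm_num)
  filter_upwards [h3, h4] with p a b
  rw [rF_left _ _ (Eq.refl _) (fun h => a (sub_eq_zero.1 h).symm) (fun h => b (eq_neg_of_add_eq_zero_right h))]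

lemma rint_side {f : ℝ → ℝ → ℂ} {L : ℂ} (hf : ∀ R, ContinuousOn (f R) (Icc 0 (1/2)))
    (h : Tendsto (fun p : ℝ × ℝ => f p.1 p.2) rfil (𝓝 L)) :
    Tendsto (fun R => ∫ y in (0:ℝ)..(1/2), f R y) atTop (𝓝 (L / 2)) := by
  rw [Metric.tendsto_nhds] at h ⊢
  intro ε hε
  have h1 := h ε hε
  rw [rfil, eventually_prod_principal_iff] at h1
  filter_upwards [h1] with R hR
  have hi : IntervalIntegrable (f R) volume 0 (1/2) := by
    apply ContinuousOn.intervalIntegrable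
    rw [uIcc_of_le (by norm_num)]; exact hf R
  have e : (∫ y in (0:ℝ)..(1/2), f R y) - L / 2 = ∫ y in (0:ℝ)..(1/2), (f R y - L) := by
    rw [intervalIntegral.integral_sub hi (by simp)]
    simp; ring
  rw [dist_eq_norm, e]
  have := intervalIntegral.norm_integral_le_of_norm_le_const (a := (0:ℝ)) (b := 1/2) (C := ε)
    (f := fun y => f R y - L) (by
      intro y hy
      rw [uIoc_of_le (by norm_num)] at hy
      have := hR y ⟨hy.1.le, hy.2⟩
      rw [dist_eq_norm] at this
      exact this.le)
  rw [sub_zero, abs_of_pos (by norm_num)] at this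
  linarith

lemma rint_sym {f : ℝ → ℂ} (hf : Continuous f) (R : ℝ) :
    ∫ x in (-R)..R, f x = ∫ x in (0:ℝ)..R, (f x + f (-x)) := by
  have h1 := intervalIntegral.integral_add_adjacent_intervals (hf.intervalIntegrable (μ := volume) (-R) 0)
    (hf.intervalIntegrable 0 R)
  have hf' : Continuous fun x => f (-x) := hf.comp continuous_neg
  rw [intervalIntegral.integral_add (hf.intervalIntegrable _ _)
    (hf'.intervalIntegrable _ _), ← h1]
  have h2 : ∫ x in (0:ℝ)..R, f (-x) = ∫ x in (-R)..0, f x := by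
    rw [intervalIntegral.integral_comp_neg]; simp
  rw [h2]; ring

noncomputable def rK (x : ℝ) : ℂ :=
  (Complex.exp (2 * π * Complex.I * (x:ℂ) ^ 2) - 1) / Complex.sinh (π * x) ^ 2

lemma rsinh_real_ne {x : ℝ} (hx : x ≠ 0) : Complex.sinh (π * x) ≠ 0 :=
  sinh_ne x (by exact_mod_cast hx) (by simp)

lemma rcosh_real_ne (x : ℝ) : Complex.cosh (π * x) ≠ 0 := by
  have : Complex.cosh (π * x) = ((Real.cosh (π * x) : ℝ) : ℂ) := by push_cast; ring
  rw [this]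
  exact_mod_cast (Real.cosh_pos _).ne'

lemma rH_line_cont (c : ℝ) (h0 : 0 ≤ c) (h1 : c ≤ 1 / 2) :
    Continuous fun x : ℝ => rH (x + c * Complex.I) := by
  rw [continuous_iff_continuousAt]
  intro x
  have h : ContinuousAt rH (x + c * Complex.I) :=
    (rH_diff _ (by simpa using h0) (by simpa using h1)).continuousAt
  exact ContinuousAt.comp (f := fun x : ℝ => (x + c * Complex.I : ℂ)) h (by fun_prop)

lemma rH_side_cont (R : ℝ) : ContinuousOn (fun y : ℝ => rH (R + y * Complex.I)) (Icc 0 (1/2)) := by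
  intro y hy
  have h : ContinuousAt rH (R + y * Complex.I) :=
    (rH_diff _ (by simpa using hy.1) (by simpa using hy.2)).continuousAt
  apply ContinuousAt.continuousWithinAt
  exact ContinuousAt.comp (f := fun y : ℝ => (R + y * Complex.I : ℂ)) h (by fun_prop)

lemma rK_eq {x : ℝ} (hx0 : x ≠ 0) :
    rK x = rH (x + ((0:ℝ) : ℂ) * Complex.I) + rH (((-x : ℝ) : ℂ) + ((0:ℝ) : ℂ) * Complex.I) := by
  have hne : ∀ x : ℝ, x ≠ 0 → rH (x + ((0:ℝ) : ℂ) * Complex.I) = rF x := by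
    intro x hx0
    have : (x : ℂ) + ((0:ℝ) : ℂ) * Complex.I = x := by simp
    rw [this]
    apply rH_eq _ (by simp) (by simp) (by exact_mod_cast hx0)
    intro h
    have := congrArg Complex.im h
    norm_num at this
  have := rF_add_neg (x : ℂ) (rsinh_real_ne hx0) (rcosh_real_ne x)
  rw [hne x hx0, hne (-x) (neg_ne_zero.2 hx0), rK, ← this]
  push_cast; ring

lemma rcontour (R : ℝ) (hR : 0 < R) :
    ∫ x in (0:ℝ)..R, rK x = Complex.I * (∫ y in (0:ℝ)..(1/2), rH (((-R : ℝ) : ℂ) + y * Complex.I))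
      - Complex.I * ∫ y in (0:ℝ)..(1/2), rH (R + y * Complex.I) := by
  have h := Complex.integral_boundary_rect_eq_zero_of_differentiableOn rH
    (((-R : ℝ) : ℂ)) (R + ((1/2 : ℝ) : ℂ) * Complex.I) (by
      intro z hz
      rw [Complex.mem_reProdIm] at hz
      have h2 := hz.2
      simp only [Complex.ofReal_im, Complex.add_im, Complex.mul_im, Complex.ofReal_re, Complex.I_im,
        Complex.I_re, mul_zero, mul_one, add_zero, zero_add] at h2
      rw [uIcc_of_le (by norm_num)] at h2
      exact (rH_diff z h2.1 h2.2).differentiableWithinAt)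
  simp only [Complex.ofReal_im, Complex.add_im, Complex.mul_im, Complex.ofReal_re, Complex.I_im,
        Complex.I_re, mul_zero, mul_one, add_zero, zero_add, Complex.add_re, Complex.mul_re, sub_zero,
        smul_eq_mul] at h
  have hb : ∫ x in (-R)..R, rH (x + ((0:ℝ) : ℂ) * Complex.I) = ∫ x in (0:ℝ)..R, rK x := by
    rw [rint_sym (rH_line_cont 0 le_rfl (by norm_num))]
    apply intervalIntegral.integral_congr_ae
    refine Eventually.of_forall (fun x hx => ?_)
    rw [uIoc_of_le hR.le] at hx
    have hx0 : x ≠ 0 := hx.1.ne'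
    exact (rK_eq hx0).symm
  have ht : ∫ x in (-R)..R, rH (x + ((1/2:ℝ) : ℂ) * Complex.I) = 0 := by
    rw [rint_sym (rH_line_cont (1/2) (by norm_num) le_rfl)]
    refine Eq.trans ?_ (intervalIntegral.integral_zero (a := (0:ℝ)) (b := R) (μ := volume))
    apply intervalIntegral.integral_congr_ae
    refine Eventually.of_forall (fun x hx => ?_)
    rw [uIoc_of_le hR.le] at hx
    have hx0 : x ≠ 0 := hx.1.ne'
    have hne : ∀ x : ℝ, x ≠ 0 → rH (x + ((1/2:ℝ) : ℂ) * Complex.I) = rF (x + Complex.I / 2) := by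
      intro x hx0
      have : (x : ℂ) + ((1/2:ℝ) : ℂ) * Complex.I = x + Complex.I / 2 := by push_cast; ring
      rw [this]
      apply rH_eq _ (by simp) (by simp)
      · intro h
        have := congrArg Complex.re h
        simp at this; exact hx0 this
      · intro h
        have := congrArg Complex.re h
        simp at this; exact hx0 this
    have := rF_half (x : ℂ) (rsinh_real_ne hx0) (rcosh_real_ne x)
    rw [hne x hx0, hne (-x) (neg_ne_zero.2 hx0), ← this]
    push_cast; ring
  rw [hb, ht] at h
  linear_combination h

lemma rH_eq' (R y : ℝ) (hR : R ≠ 0) (h0 : 0 ≤ y) (h1 : y ≤ 1/2) :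
    rH (R + y * Complex.I) = rF (R + y * Complex.I) := by
  apply rH_eq _ (by simpa using h0) (by simpa using h1)
  · intro h
    have := congrArg Complex.re h
    simp at this; exact hR this
  · intro h
    have := congrArg Complex.re h
    simp at this; exact hR this

lemma rK_tendsto : Tendsto (fun R : ℝ => ∫ x in (0:ℝ)..R, rK x) atTop
    (𝓝 (1 / (2 * π) + (Complex.I - 1) / 4)) := by
  have hpos : ∀ᶠ p : ℝ × ℝ in rfil, 0 < p.1 := tendsto_fst.eventually (eventually_gt_atTop (0:ℝ))
  have hr := rint_side (f := fun R y => rH (R + y * Complex.I)) rH_side_cont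
    (rF_tendsto_right.congr' (by
      filter_upwards [hpos, rfil_ev] with p h1 h2
      rw [rH_eq' _ _ h1.ne' h2.2.1 h2.2.2]))
  have hl := rint_side (f := fun R y => rH (((-R : ℝ) : ℂ) + y * Complex.I)) (fun R => rH_side_cont (-R))
    (rF_tendsto_left.congr' (by
      filter_upwards [hpos, rfil_ev] with p h1 h2
      rw [rH_eq' _ _ (neg_ne_zero.2 h1.ne') h2.2.1 h2.2.2]))
  have := (hl.const_mul Complex.I).sub (hr.const_mul Complex.I)
  have e : Complex.I * ((-(Complex.I / (2 * π)) - -((1 + Complex.I) / 4)) / 2)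
      - Complex.I * ((Complex.I / (2 * π) - (1 + Complex.I) / 4) / 2)
      = 1 / (2 * π) + (Complex.I - 1) / 4 := by
    linear_combination (-(1 / (2 * π)) + 1 / 4) * Complex.I_sq
  rw [e] at this
  refine this.congr' ?_
  filter_upwards [eventually_gt_atTop 0] with R hR
  exact (rcontour R hR).symm

lemma rK_im (x : ℝ) : (rK x).im = Real.sin (2 * π * x ^ 2) / Real.sinh (π * x) ^ 2 := by
  have h1 : Complex.sinh (π * x) ^ 2 = ((Real.sinh (π * x) ^ 2 : ℝ) : ℂ) := by push_cast; ring
  have h2 : 2 * π * Complex.I * (x:ℂ) ^ 2 = ((2 * π * x ^ 2 : ℝ) : ℂ) * Complex.I := by push_cast; ring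
  rw [rK, h1, h2, Complex.div_ofReal_im, Complex.sub_im, Complex.exp_ofReal_mul_I_im]
  simp

noncomputable def rg (x : ℝ) : ℝ := Real.sin (2 * π * x ^ 2) / Real.sinh (π * x) ^ 2

lemma rsinh_ge {x : ℝ} (hx : 0 < x) : (π * x) ^ 2 ≤ Real.sinh (π * x) ^ 2 := by
  have := Real.self_le_sinh_iff.2 (by positivity : 0 ≤ π * x)
  gcongr

lemma rg_int : IntegrableOn rg (Ioi 0) := by
  have hm : Measurable rg := by unfold rg; fun_prop
  rw [← Ioc_union_Ioi_eq_Ioi (zero_le_one' ℝ)]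
  apply IntegrableOn.union
  · refine Measure.integrableOn_of_bounded (M := 2 / π) (by simp) hm.aestronglyMeasurable ?_
    refine (ae_restrict_iff' measurableSet_Ioc).2 (Eventually.of_forall fun x hx => ?_)
    have h1 := rsinh_ge hx.1
    have hx0 := hx.1
    rw [rg, norm_div, Real.norm_eq_abs, Real.norm_eq_abs, abs_of_nonneg (sq_nonneg (Real.sinh (π * x)))]
    calc _ ≤ (2 * π * x ^ 2) / (π * x) ^ 2 := by
          gcongr
          exact (Real.abs_sin_le_abs).trans (abs_of_nonneg (by positivity)).le
      _ = 2 / π := by field_simp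
  · refine Integrable.mono' (integrableOn_Ioi_rpow_of_lt (by norm_num : (-2:ℝ) < -1) one_pos)
      hm.aestronglyMeasurable ?_
    refine (ae_restrict_iff' measurableSet_Ioi).2 (Eventually.of_forall fun x hx => ?_)
    have hx0 : (0:ℝ) < x := one_pos.trans hx
    have h1 := rsinh_ge hx0
    rw [rg, norm_div, Real.norm_eq_abs, Real.norm_eq_abs, abs_of_nonneg (sq_nonneg (Real.sinh (π * x)))]
    rw [Real.rpow_neg hx0.le, Real.rpow_two, inv_eq_one_div]
    apply div_le_div₀ zero_le_one (Real.abs_sin_le_one _) (by positivity)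
    refine le_trans ?_ h1
    rw [mul_pow]
    have : (1:ℝ) ≤ π ^ 2 := by nlinarith [Real.pi_gt_three]
    nlinarith [sq_nonneg x]

lemma rg_integral : ∫ x in Ioi (0:ℝ), rg x = 1 / 4 := by
  have h1 := intervalIntegral_tendsto_integral_Ioi 0 rg_int tendsto_id
  have h2 := (Complex.continuous_im.tendsto _).comp rK_tendsto
  have hi : ∀ R : ℝ, 0 < R → IntervalIntegrable rK volume 0 R := by
    intro R hR
    have hc := rH_line_cont 0 le_rfl (by norm_num)
    have hc' : Continuous fun x : ℝ => rH (((-x : ℝ) : ℂ) + ((0:ℝ) : ℂ) * Complex.I) :=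
      hc.comp continuous_neg
    refine ((hc.add hc').intervalIntegrable (μ := volume) 0 R).congr (fun x hx => ?_)
    rw [uIoc_of_le hR.le] at hx
    exact (rK_eq hx.1.ne').symm
  refine tendsto_nhds_unique h1 ?_
  have e : (1 / (2 * π) + (Complex.I - 1) / 4 : ℂ).im = 1 / 4 := by
    have : (1 / (2 * π) + (Complex.I - 1) / 4 : ℂ) = ((1 / (2 * π) - 1/4 : ℝ) : ℂ) + ((1/4 : ℝ) : ℂ) * Complex.I := by
      push_cast; ring
    rw [this]; simp
  rw [e] at h2
  refine h2.congr' ?_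
  filter_upwards [eventually_gt_atTop 0] with R hR
  simp only [Function.comp, id]
  have := intervalIntegral.intervalIntegral_eq_integral_uIoc rK 0 R volume
  rw [← Complex.imCLM_apply, ← ContinuousLinearMap.intervalIntegral_comp_comm _ (hi R hR)]
  simp only [Complex.imCLM_apply, rK_im, rg]

lemma rexp_ge {t : ℝ} (ht : 0 < t) : 2 * π * t ≤ Real.exp (2 * π * t) - 1 := by
  linarith [Real.add_one_le_exp (2 * π * t)]

lemma rexp_ge3 {t : ℝ} (ht : 0 < t) : 2 * t ^ 3 ≤ Real.exp (2 * π * t) - 1 := by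
  have h0 : (0:ℝ) ≤ 2 * π * t := by positivity
  have h := Real.sum_le_exp_of_nonneg h0 4
  simp [Finset.sum_range_succ, Nat.factorial] at h
  have h1 : 2 * t ^ 3 ≤ (2 * π * t) ^ 3 / 6 := by
    have : (3 * t) ^ 3 ≤ (2 * π * t) ^ 3 := by gcongr; linarith [Real.pi_gt_three]
    have : 0 < t ^ 3 := by positivity
    nlinarith
  have : 0 ≤ (2 * π * t) ^ 2 := sq_nonneg _
  linarith

noncomputable def rf (t : ℝ) : ℝ := (2 * t * Real.cos (2 * π * t ^ 2)) * (Real.exp (2 * π * t) - 1)⁻¹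

lemma rf_int : IntegrableOn rf (Ioi 0) := by
  have hm : Measurable rf := by unfold rf; fun_prop
  rw [← Ioc_union_Ioi_eq_Ioi (zero_le_one' ℝ)]
  have hb : ∀ t : ℝ, 0 < t → ‖rf t‖ ≤ 2 * t / (Real.exp (2 * π * t) - 1) := by
    intro t ht
    have := rexp_ge ht
    have h2 : 0 < 2 * π * t := by positivity
    rw [rf, ← div_eq_mul_inv, norm_div, norm_mul, Real.norm_eq_abs, Real.norm_eq_abs, Real.norm_eq_abs,
      abs_of_pos (by linarith : 0 < Real.exp (2 * π * t) - 1), abs_of_pos (by linarith : 0 < 2 * t)]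
    have := Real.abs_cos_le_one (2 * π * t ^ 2)
    have h4 : 0 < Real.exp (2 * π * t) - 1 := by linarith
    apply div_le_div_of_nonneg_right _ h4.le
    nlinarith
  apply IntegrableOn.union
  · refine Measure.integrableOn_of_bounded (M := 1 / π) (by simp) hm.aestronglyMeasurable ?_
    refine (ae_restrict_iff' measurableSet_Ioc).2 (Eventually.of_forall fun x hx => ?_)
    have hx0 : 0 < x := hx.1
    have h1 := rexp_ge hx0
    refine (hb x hx0).trans ?_
    calc _ ≤ 2 * x / (2 * π * x) := by gcongr
      _ = 1 / π := by field_simp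
  · refine Integrable.mono' (integrableOn_Ioi_rpow_of_lt (by norm_num : (-2:ℝ) < -1) one_pos)
      hm.aestronglyMeasurable ?_
    refine (ae_restrict_iff' measurableSet_Ioi).2 (Eventually.of_forall fun x hx => ?_)
    have hx0 : (0:ℝ) < x := one_pos.trans hx
    have h1 := rexp_ge3 hx0
    refine (hb x hx0).trans ?_
    rw [Real.rpow_neg hx0.le, Real.rpow_two]
    calc _ ≤ 2 * x / (2 * x ^ 3) := by gcongr
      _ = _ := by field_simp

lemma rf_integral : ∫ t in Ioi (0:ℝ), rf t = 1 / 16 := by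
  have hpos : ∀ t : ℝ, 0 < t → 0 < Real.exp (2 * π * t) - 1 := by
    intro t ht
    have := rexp_ge ht
    have h2 : 0 < 2 * π * t := by positivity
    linarith
  let u : ℝ → ℝ := fun t => Real.sin (2 * π * t ^ 2) / (2 * π)
  let u' : ℝ → ℝ := fun t => 2 * t * Real.cos (2 * π * t ^ 2)
  let v : ℝ → ℝ := fun t => (Real.exp (2 * π * t) - 1)⁻¹
  let v' : ℝ → ℝ := fun t => -(π / 2) / Real.sinh (π * t) ^ 2
  have hu : ∀ x ∈ Ioi (0:ℝ), HasDerivAt u (u' x) x := by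
    intro x hx
    have h := (((hasDerivAt_pow 2 x).const_mul (2 * π)).sin).div_const (2 * π)
    refine HasDerivAt.congr_deriv h ?_
    simp only [u']; field_simp; simp; ring
  have hv : ∀ x ∈ Ioi (0:ℝ), HasDerivAt v (v' x) x := by
    intro x hx
    have h := ((((hasDerivAt_id x).const_mul (2 * π)).exp).sub_const 1).inv (hpos x hx).ne'
    refine HasDerivAt.congr_deriv h ?_
    simp only [v', id]
    have hp := (hpos x hx).ne'
    have hx0 : (0:ℝ) < x := hx
    have hsh : Real.sinh (π * x) ≠ 0 := (Real.sinh_pos_iff.2 (by positivity)).ne'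
    have e1 : Real.exp (2 * π * x) = Real.exp (π * x) ^ 2 := by
      rw [← Real.exp_nat_mul]; congr 1; push_cast; ring
    have e2 : Real.sinh (π * x) = (Real.exp (2 * π * x) - 1) / (2 * Real.exp (π * x)) := by
      rw [Real.sinh_eq, Real.exp_neg, e1]; field_simp
    rw [e2]
    rw [div_pow, mul_pow, ← e1]
    field_simp
  have huv' : IntegrableOn (u * v') (Ioi 0) := by
    have : u * v' = fun x => (-(1/4)) * rg x := by
      funext x; simp only [u, v', rg, Pi.mul_apply]; field_simp; ring
    rw [this]; exact rg_int.const_mul _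
  have hu'v : IntegrableOn (u' * v) (Ioi 0) := rf_int
  have hb : ∀ t : ℝ, 0 < t → ‖(u * v) t‖ ≤ t := by
    intro t ht
    have h1 := rexp_ge ht
    have h3 := hpos t ht
    simp only [Pi.mul_apply, u, v]
    rw [← div_eq_mul_inv, norm_div, norm_div, Real.norm_eq_abs, Real.norm_eq_abs, Real.norm_eq_abs, abs_of_pos h3,
      abs_of_pos (by positivity : 0 < 2 * π), div_div]
    calc _ ≤ (2 * π * t ^ 2) / (2 * π * (2 * π * t)) := by
          gcongr
          exact (Real.abs_sin_le_abs).trans (abs_of_nonneg (by positivity)).le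
      _ = t / (2 * π) := by field_simp
      _ ≤ t := div_le_self ht.le (by linarith [Real.pi_gt_three])
  have h0 : Tendsto (u * v) (𝓝[>] 0) (𝓝 0) := by
    refine squeeze_zero_norm' (a := fun t : ℝ => t) ?_ (tendsto_id.mono_left nhdsWithin_le_nhds)
    filter_upwards [self_mem_nhdsWithin] with t ht
    exact hb t ht
  have hinf : Tendsto (u * v) atTop (𝓝 0) := by
    refine squeeze_zero_norm' (a := fun t : ℝ => t⁻¹) ?_ tendsto_inv_atTop_zero
    filter_upwards [eventually_gt_atTop 0] with t ht
    have h1 := rexp_ge ht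
    have h3 := hpos t ht
    simp only [Pi.mul_apply, u, v]
    rw [← div_eq_mul_inv, norm_div, norm_div, Real.norm_eq_abs, Real.norm_eq_abs, Real.norm_eq_abs, abs_of_pos h3,
      abs_of_pos (by positivity : 0 < 2 * π), div_div, inv_eq_one_div]
    apply div_le_div₀ zero_le_one (Real.abs_sin_le_one _) ht
    have := Real.pi_gt_three
    nlinarith
  have := integral_Ioi_mul_deriv_eq_deriv_mul hu hv huv' hu'v h0 hinf
  have e : ∫ x in Ioi (0:ℝ), u x * v' x = -(1/4) * (1/4) := by
    have e0 : ∫ x in Ioi (0:ℝ), u x * v' x = ∫ x in Ioi (0:ℝ), -(1/4) * rg x := ?_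
    · rw [e0, integral_const_mul, rg_integral]
    congr 1
    funext x; simp only [u, v', rg]; field_simp; ring
  rw [e] at this
  have e2 : ∫ x in Ioi (0:ℝ), u' x * v x = ∫ t in Ioi (0:ℝ), rf t := Eq.refl _
  rw [e2] at this
  linarith

lemma rf_eq {t : ℝ} (ht : t ∈ Ioi (0:ℝ)) :
    (|(2:ℝ)| * t ^ ((2:ℝ) - 1)) • (fun x : ℝ => Real.cos (2 * π * x) / (Real.exp (2 * π * Real.sqrt x) - 1)) (t ^ (2:ℝ))
      = rf t := by
  have ht' : (0:ℝ) < t := ht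
  have h1 : ((2:ℝ) - 1) = 1 := by norm_num
  rw [h1]
  simp only [Real.rpow_two, Real.rpow_one, Real.sqrt_sq ht'.le, smul_eq_mul, abs_two, rf]
  ring

/-- Ramanujan's integral `R_C(0, 2)` converges and equals `1/16`. -/
theorem ramanujan_RC_zero_two :
    IntegrableOn
      (fun x : ℝ => Real.cos (2 * π * x) / (Real.exp (2 * π * Real.sqrt x) - 1)) (Ioi 0) ∧
    (∫ x in Ioi (0:ℝ), Real.cos (2 * π * x) / (Real.exp (2 * π * Real.sqrt x) - 1)) = 1 / 16 := by
  constructor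
  · rw [← integrableOn_Ioi_comp_rpow_iff _ (two_ne_zero : (2:ℝ) ≠ 0)]
    exact rf_int.congr_fun (fun t ht => (rf_eq ht).symm) measurableSet_Ioi
  · rw [← integral_comp_rpow_Ioi
      (fun x : ℝ => Real.cos (2 * π * x) / (Real.exp (2 * π * Real.sqrt x) - 1)) (two_ne_zero : (2:ℝ) ≠ 0),
      ← rf_integral]
    exact setIntegral_congr_fun measurableSet_Ioi (fun t ht => rf_eq ht)
end

section
/- The integral R_C(0, 4) = ∫_0^∞ cos(4πx)/(exp(2π√x) − 1) dx converges and equals (3 − √2)/32. -/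
open MeasureTheory Real Set

noncomputable def WW (b : ℂ) : ℂ := (1 / b) * (1 / b) ^ (1 / 2 : ℂ)

lemma summable_sq_int (t : ℝ) (ht : 0 < t) :
    Summable (fun k : ℤ => t ^ 2 / (π * (t ^ 2 + (k:ℝ) ^ 2))) := by
  have h1 : Summable (fun k : ℤ => (t ^ 2 / π) * (1 / (k:ℝ) ^ 2) + if k = 0 then 1 / π else 0) := by
    apply Summable.add
    · exact (Real.summable_one_div_int_pow.mpr (by norm_num)).mul_left _
    · exact summable_of_ne_finset_zero (s := {0}) (by intro b hb; simp at hb; simp [hb])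
  refine Summable.of_nonneg_of_le (fun k => by positivity) (fun k => ?_) h1
  by_cases hk : k = 0
  · subst hk; simp; field_simp; rfl
  · have : (0:ℝ) < (k:ℝ)^2 := by positivity
    simp only [hk, if_false, add_zero]
    rw [div_mul_div_comm, mul_one]
    gcongr
    nlinarith [sq_nonneg t]

lemma coth_sum (t : ℝ) (ht : 0 < t) :
    ∑' k : ℤ, ((t ^ 2 / (π * (t ^ 2 + (k:ℝ) ^ 2)) : ℝ) : ℂ)
      = ((t * (2 / (Real.exp (2 * π * t) - 1) + 1) : ℝ) : ℂ) := by
  have hpi := Real.pi_pos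
  have hs : Summable (fun k : ℤ => ((t ^ 2 / (π * (t ^ 2 + (k:ℝ) ^ 2)) : ℝ) : ℂ)) := by
    exact_mod_cast summable_sq_int t ht
  rw [tsum_int_eq_zero_add_two_mul_tsum_pnat (by intro k; simp) hs]
  have hz : (t * Complex.I : ℂ) ∈ Complex.integerComplement := by
    rw [Complex.mem_integerComplement_iff]
    rintro ⟨n, hn⟩
    have := congrArg Complex.im hn
    simp at this
    exact ht.ne this
  have h := cot_series_rep hz
  have htc : (t : ℂ) ≠ 0 := by exact_mod_cast ht.ne'
  have hpc : (π : ℂ) ≠ 0 := by exact_mod_cast hpi.ne'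
  have h2 : ∀ n : ℕ+, (1 / ((t * Complex.I : ℂ) - (n:ℕ)) + 1 / ((t * Complex.I : ℂ) + (n:ℕ)))
      = (-2 * π * Complex.I / t) * ((t ^ 2 / (π * (t ^ 2 + ((n:ℕ):ℤ) ^ 2)) : ℝ) : ℂ) := by
    intro n
    have hn : (0:ℝ) < (n:ℕ) := by exact_mod_cast n.pos
    have e1 : (t * Complex.I : ℂ) - (n:ℕ) ≠ 0 := by
      intro h; have := congrArg Complex.im h; simp at this; exact ht.ne' this
    have e2 : (t * Complex.I : ℂ) + (n:ℕ) ≠ 0 := by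
      intro h; have := congrArg Complex.im h; simp at this; exact ht.ne' this
    have e3 : (t:ℂ) ^ 2 + ((n:ℕ):ℂ) ^ 2 ≠ 0 := by
      have : (t:ℝ) ^ 2 + ((n:ℕ):ℝ) ^ 2 ≠ 0 := by positivity
      exact_mod_cast this
    push_cast
    rw [div_add_div _ _ e1 e2, mul_div_assoc', div_mul_eq_mul_div, div_div, div_eq_div_iff (mul_ne_zero e1 e2) (by positivity)]
    ring_nf
    simp
  simp_rw [h2] at h
  rw [tsum_mul_left, Complex.cot_pi_eq_exp_ratio] at h
  set S := ∑' n : ℕ+, ((t ^ 2 / (π * (t ^ 2 + (((n:ℕ):ℤ):ℝ) ^ 2)) : ℝ) : ℂ) with hS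
  have hq : Complex.exp (2 * π * Complex.I * (t * Complex.I)) = (Complex.exp (2 * π * t))⁻¹ := by
    rw [← Complex.exp_neg]; congr 1
    linear_combination (2 * π * t : ℂ) * Complex.I_mul_I
  have hE : (Complex.exp (2 * π * t)) - 1 ≠ 0 := by
    have : Real.exp (2 * π * t) - 1 ≠ 0 := by
      have := Real.add_one_lt_exp (x := 2 * π * t) (by positivity)
      have : 0 < 2 * π * t := by positivity
      linarith
    exact_mod_cast this
  have hE0 : Complex.exp (2 * π * t) ≠ 0 := Complex.exp_ne_zero _
  have hI : Complex.I ≠ 0 := Complex.I_ne_zero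
  rw [hq] at h
  have hF : (1 - (Complex.exp (2 * π * t))⁻¹) ≠ 0 := by
    intro h'
    apply hE
    field_simp at h'
    linear_combination h'
  have e1 : ((Complex.exp (2 * π * t))⁻¹ + 1) / (Complex.I * (1 - (Complex.exp (2 * π * t))⁻¹))
      = -Complex.I * (2 / (Complex.exp (2 * π * t) - 1) + 1) := by
    rw [div_eq_iff (mul_ne_zero hI hF)]
    have : -Complex.I * (2 / (Complex.exp (2 * π * t) - 1) + 1)
        * (Complex.I * (1 - (Complex.exp (2 * π * t))⁻¹))
        = (2 / (Complex.exp (2 * π * t) - 1) + 1) * (1 - (Complex.exp (2 * π * t))⁻¹) := by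
      linear_combination (-(2 / (Complex.exp (2 * π * t) - 1) + 1) * (1 - (Complex.exp (2 * π * t))⁻¹)) * Complex.I_mul_I
    rw [this]
    field_simp
    ring
  have e2 : 1 / ((t:ℂ) * Complex.I) = -Complex.I / t := by
    rw [div_eq_div_iff (mul_ne_zero htc hI) htc]
    linear_combination (t:ℂ) * Complex.I_mul_I
  rw [e1, e2] at h
  have h3 : (π:ℂ) * (2 / (Complex.exp (2 * π * t) - 1) + 1) = 1 / t + 2 * π / t * S := by
    apply mul_left_cancel₀ (neg_ne_zero.mpr hI)
    linear_combination h
  have h4 : (t:ℂ) * (2 / (Complex.exp (2 * π * t) - 1) + 1) = 1 / π + 2 * S := by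
    have : (t:ℂ) * (2 / (Complex.exp (2 * π * t) - 1) + 1)
      = t / π * ((π:ℂ) * (2 / (Complex.exp (2 * π * t) - 1) + 1)) := by
      field_simp
    rw [this, h3]
    field_simp
  push_cast
  rw [h4]
  simp only [nsmul_eq_mul]
  push_cast
  congr 1
  field_simp
  ring

lemma norm_gauss (b : ℂ) (t : ℝ) :
    ‖Complex.exp (-(π * b) * (t:ℂ) ^ 2)‖ = Real.exp (-(π * b.re) * t ^ 2) := by
  rw [Complex.norm_exp]
  congr 1
  rw [← Complex.ofReal_pow, Complex.re_mul_ofReal]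
  simp

lemma re_pi_mul {b : ℂ} (hb : 0 < b.re) : 0 < ((π:ℂ) * b).re := by
  rw [Complex.re_ofReal_mul]; exact mul_pos Real.pi_pos hb

lemma integrable_sq_gauss (b : ℂ) (hb : 0 < b.re) :
    Integrable (fun t : ℝ => ((t:ℂ) ^ 2 * Complex.exp (-(π * b) * (t:ℂ) ^ 2))) := by
  have h := integrable_rpow_mul_exp_neg_mul_sq (b := π * b.re) (by positivity) (s := 2) (by norm_num)
  refine h.mono' (by fun_prop) (Filter.Eventually.of_forall fun t => ?_)
  rw [norm_mul, norm_gauss]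
  simp

lemma int_sq_gauss (b : ℂ) (hb : 0 < b.re) :
    ∫ t in Ioi (0:ℝ), ((t:ℂ) ^ 2 * Complex.exp (-(π * b) * (t:ℂ) ^ 2)) = WW b / (4 * π) := by
  have hpi := Real.pi_pos
  have hb0 : b ≠ 0 := by rintro rfl; simp at hb
  have hpc : (π : ℂ) ≠ 0 := by exact_mod_cast hpi.ne'
  have i0 := integrable_cexp_neg_mul_sq (re_pi_mul hb)
  have i1 := integrable_mul_cexp_neg_mul_sq (re_pi_mul hb)
  have i2 := integrable_sq_gauss b hb
  have hd : ∀ x ∈ Ici (0:ℝ), HasDerivAt (fun t : ℝ => (t:ℂ) * Complex.exp (-(π * b) * (t:ℂ) ^ 2))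
      (Complex.exp (-(π * b) * (x:ℂ) ^ 2) - (2 * π * b) * ((x:ℂ) ^ 2 * Complex.exp (-(π * b) * (x:ℂ) ^ 2))) x := by
    intro x _
    have h1 : HasDerivAt (fun z : ℂ => z * Complex.exp (-(π * b) * z ^ 2))
      (Complex.exp (-(π * b) * (x:ℂ) ^ 2) - (2 * π * b) * ((x:ℂ) ^ 2 * Complex.exp (-(π * b) * (x:ℂ) ^ 2))) (x:ℂ) := by
      have := (hasDerivAt_id (x:ℂ)).mul (((hasDerivAt_pow 2 (x:ℂ)).const_mul (-(π * b))).cexp)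
      convert! this using 1
      simp
      ring
    exact h1.comp_ofReal
  have i3 : IntegrableOn (fun x : ℝ => Complex.exp (-(π * b) * (x:ℂ) ^ 2) - (2 * π * b) * ((x:ℂ) ^ 2 * Complex.exp (-(π * b) * (x:ℂ) ^ 2))) (Ioi 0) :=
    (i0.sub (i2.const_mul _)).integrableOn
  have ht := tendsto_zero_of_hasDerivAt_of_integrableOn_Ioi (a := 0) (fun x hx => hd x (mem_Ici.mpr (le_of_lt hx))) i3 i1.integrableOn
  have h := integral_Ioi_of_hasDerivAt_of_tendsto' hd i3 ht
  rw [integral_sub i0.integrableOn (i2.const_mul _).integrableOn, integral_const_mul,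
    integral_gaussian_complex_Ioi (re_pi_mul hb)] at h
  simp only [Complex.ofReal_zero, zero_mul, sub_zero] at h
  have e : (π:ℂ) / (π * b) = 1 / b := by field_simp
  rw [e] at h
  unfold WW
  generalize (∫ t in Ioi (0:ℝ), ((t:ℂ) ^ 2 * Complex.exp (-(π * b) * (t:ℂ) ^ 2))) = J at h ⊢
  have : (2 * π * b) ≠ 0 := by simp [hpc, hb0]
  apply mul_left_cancel₀ this
  field_simp
  field_simp at h
  linear_combination -h

lemma c_eq (a : ℂ) (ha : 0 < a.re) (k : ℤ) :
    ∫ t in Ioi (0:ℝ), Complex.exp (-(π * a) * (t:ℂ) ^ 2) * ((t ^ 2 / (π * (t ^ 2 + (k:ℝ) ^ 2)) : ℝ) : ℂ)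
    = ∫ u in Ioi (0:ℝ), (Real.exp (-(π * (k:ℝ) ^ 2) * u) : ℂ) * (WW (a + u) / (4 * π)) := by
  have hpi := Real.pi_pos
  let f : ℝ → ℝ → ℂ := fun t u => (t:ℂ) ^ 2 * Complex.exp (-(π * (a + u)) * (t:ℂ) ^ 2) *
    (Real.exp (-(π * (k:ℝ) ^ 2) * u) : ℂ)
  have hf : ∀ t u : ℝ, f t u = ((t:ℂ) ^ 2 * Complex.exp (-(π * a) * (t:ℂ) ^ 2)) *
      (Real.exp (-(π * (t ^ 2 + (k:ℝ) ^ 2)) * u) : ℂ) := by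
    intro t u
    simp only [f]
    push_cast
    rw [mul_assoc, mul_assoc, ← Complex.exp_add, ← Complex.exp_add]
    congr 2
    ring
  have hneg : ∀ t ∈ Ioi (0:ℝ), -(π * (t ^ 2 + (k:ℝ) ^ 2)) < 0 := by
    intro t ht
    have : (0:ℝ) < t := ht
    have : 0 < π * (t ^ 2 + (k:ℝ) ^ 2) := by positivity
    linarith
  have hr : ∀ t ∈ Ioi (0:ℝ), ∫ u in Ioi (0:ℝ), Real.exp (-(π * (t ^ 2 + (k:ℝ) ^ 2)) * u)
      = 1 / (π * (t ^ 2 + (k:ℝ) ^ 2)) := by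
    intro t ht
    rw [integral_exp_mul_Ioi (hneg t ht)]
    simp [neg_div]
  have hi : Integrable (Function.uncurry f) ((volume.restrict (Ioi 0)).prod (volume.restrict (Ioi 0))) := by
    rw [integrable_prod_iff]
    · constructor
      · refine (ae_restrict_iff' measurableSet_Ioi).mpr (Filter.Eventually.of_forall fun t ht => ?_)
        simp only [Function.uncurry, hf]
        apply Integrable.const_mul
        exact (integrableOn_exp_mul_Ioi (hneg t ht) 0).ofReal
      · have : IntegrableOn (fun t : ℝ => Real.exp (-(π * a.re) * t ^ 2) * (1 / π)) (Ioi 0) :=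
          ((integrable_exp_neg_mul_sq (b := π * a.re) (by positivity)).mul_const _).integrableOn
        refine this.mono' ?_ ?_
        · apply AEStronglyMeasurable.integral_prod_right' (f := fun p : ℝ × ℝ => ‖Function.uncurry f p‖)
          apply AEStronglyMeasurable.norm
          apply Continuous.aestronglyMeasurable
          simp only [Function.uncurry_def, f]
          fun_prop
        · refine (ae_restrict_iff' measurableSet_Ioi).mpr (Filter.Eventually.of_forall fun t ht => ?_)
          simp only [Function.uncurry, hf, norm_mul, norm_gauss]
          simp only [Complex.norm_real, Real.norm_eq_abs, Real.abs_exp]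
          rw [integral_const_mul, hr t ht]
          have ht' : (0:ℝ) < t := ht
          rw [abs_of_nonneg (by positivity)]
          simp only [norm_pow, Complex.norm_real, Real.norm_eq_abs, sq_abs]
          rw [mul_comm (t^2), mul_assoc]
          gcongr
          rw [mul_one_div, div_le_div_iff₀ (by positivity) (by positivity)]
          nlinarith [mul_nonneg hpi.le (sq_nonneg (k:ℝ))]
    · apply Continuous.aestronglyMeasurable
      simp only [Function.uncurry_def, f]
      fun_prop
  have h := integral_integral_swap hi
  calc _ = ∫ t in Ioi (0:ℝ), ∫ u in Ioi (0:ℝ), f t u := by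
        refine setIntegral_congr_fun measurableSet_Ioi fun t ht => ?_
        simp only [hf]
        rw [integral_const_mul, integral_complex_ofReal, hr t ht]
        push_cast
        ring
    _ = _ := h
    _ = _ := by
        refine setIntegral_congr_fun measurableSet_Ioi fun u hu => ?_
        simp only [f]
        have hu' : (0:ℝ) < u := hu
        rw [integral_mul_const, int_sq_gauss (a + u) (by simp; linarith)]
        ring

lemma summable_one_add (C D : ℝ) : Summable (fun k : ℤ => C * (1 / (k:ℝ) ^ 2) + if k = 0 then D else 0) := by
  apply Summable.add
  · exact (Real.summable_one_div_int_pow.mpr (by norm_num)).mul_left _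
  · exact summable_of_ne_finset_zero (s := {0}) (by intro b hb; simp at hb; simp [hb])

lemma coth_int (a : ℂ) (ha : 0 < a.re) :
    HasSum (fun k : ℤ => ∫ t in Ioi (0:ℝ), Complex.exp (-(π * a) * (t:ℂ) ^ 2) * ((t ^ 2 / (π * (t ^ 2 + (k:ℝ) ^ 2)) : ℝ) : ℂ))
    (∫ t in Ioi (0:ℝ), Complex.exp (-(π * a) * (t:ℂ) ^ 2) * ((t * (2 / (Real.exp (2 * π * t) - 1) + 1) : ℝ) : ℂ)) := by
  have hpi := Real.pi_pos
  have e : (∫ t in Ioi (0:ℝ), Complex.exp (-(π * a) * (t:ℂ) ^ 2) * ((t * (2 / (Real.exp (2 * π * t) - 1) + 1) : ℝ) : ℂ))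
     = ∫ t in Ioi (0:ℝ), ∑' k : ℤ, Complex.exp (-(π * a) * (t:ℂ) ^ 2) * ((t ^ 2 / (π * (t ^ 2 + (k:ℝ) ^ 2)) : ℝ) : ℂ) := by
    refine setIntegral_congr_fun measurableSet_Ioi fun t ht => ?_
    rw [tsum_mul_left, coth_sum t ht]
  rw [e]
  have g0 : IntegrableOn (fun t : ℝ => Real.exp (-(π * a.re) * t ^ 2) * (1 / π)) (Ioi 0) :=
    ((integrable_exp_neg_mul_sq (b := π * a.re) (by positivity)).mul_const _).integrableOn
  have g2 : IntegrableOn (fun t : ℝ => t ^ 2 * Real.exp (-(π * a.re) * t ^ 2) * (1 / π)) (Ioi 0) := by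
    have := (integrable_rpow_mul_exp_neg_mul_sq (b := π * a.re) (by positivity) (s := 2) (by norm_num))
    simp only [Real.rpow_two] at this
    exact (this.mul_const _).integrableOn
  have hn : ∀ (k : ℤ) (t : ℝ), ‖Complex.exp (-(π * a) * (t:ℂ) ^ 2) * ((t ^ 2 / (π * (t ^ 2 + (k:ℝ) ^ 2)) : ℝ) : ℂ)‖
      = Real.exp (-(π * a.re) * t ^ 2) * (t ^ 2 / (π * (t ^ 2 + (k:ℝ) ^ 2))) := by
    intro k t
    rw [norm_mul, norm_gauss, Complex.norm_real, Real.norm_eq_abs, abs_of_nonneg (by positivity)]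
  have b0 : ∀ (k : ℤ), ∀ t ∈ Ioi (0:ℝ), Real.exp (-(π * a.re) * t ^ 2) * (t ^ 2 / (π * (t ^ 2 + (k:ℝ) ^ 2)))
      ≤ Real.exp (-(π * a.re) * t ^ 2) * (1 / π) := by
    intro k t ht
    have ht' : (0:ℝ) < t := ht
    refine mul_le_mul_of_nonneg_left ?_ (Real.exp_pos _).le
    rw [div_le_div_iff₀ (by positivity) (by positivity)]
    nlinarith [mul_nonneg hpi.le (sq_nonneg (k:ℝ))]
  have hI : ∀ k : ℤ, IntegrableOn (fun t : ℝ => Complex.exp (-(π * a) * (t:ℂ) ^ 2) * ((t ^ 2 / (π * (t ^ 2 + (k:ℝ) ^ 2)) : ℝ) : ℂ)) (Ioi 0) := by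
    intro k
    refine g0.mono' (Measurable.aestronglyMeasurable (by fun_prop)) ?_
    refine (ae_restrict_iff' measurableSet_Ioi).mpr (Filter.Eventually.of_forall fun t ht => ?_)
    rw [hn]; exact b0 k t ht
  refine hasSum_integral_of_summable_integral_norm hI ?_
  simp only [hn]
  refine Summable.of_nonneg_of_le (fun k => integral_nonneg fun t => by positivity) (fun k => ?_)
    (summable_one_add (∫ t in Ioi (0:ℝ), t ^ 2 * Real.exp (-(π * a.re) * t ^ 2) * (1 / π))
      (∫ t in Ioi (0:ℝ), Real.exp (-(π * a.re) * t ^ 2) * (1 / π)))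
  have hIk := (hI k).norm
  simp only [hn] at hIk
  by_cases hk : k = 0
  · simp only [hk, if_true]
    subst hk
    have := setIntegral_mono_on hIk g0 measurableSet_Ioi (b0 0)
    simpa using this
  · simp only [hk, if_false, add_zero]
    rw [← integral_mul_const]
    refine setIntegral_mono_on hIk (g2.mul_const _) measurableSet_Ioi fun t ht => ?_
    have ht' : (0:ℝ) < t := ht
    have : (0:ℝ) < (k:ℝ)^2 := by positivity
    rw [mul_comm (t^2), mul_assoc, mul_assoc]
    gcongr
    rw [mul_one_div, mul_div_assoc']
    rw [mul_one_div, div_div]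
    gcongr
    nlinarith [sq_nonneg t]

noncomputable def BB (u : ℝ) : ℝ := 2 ^ (3 / 2 : ℝ) * (1 + ‖u‖) ^ (-(3 / 2) : ℝ)

lemma norm_WW (b : ℂ) (hb : b ≠ 0) : ‖WW b‖ = ‖b‖ ^ (-(3 / 2) : ℝ) := by
  unfold WW
  have hb' : 0 < ‖b‖ := norm_pos_iff.mpr hb
  have e : (1 / 2 : ℂ) = ((1 / 2 : ℝ) : ℂ) := by push_cast; rfl
  rw [norm_mul, e, Complex.norm_cpow_real, norm_div, norm_one, one_div,
    ← Real.rpow_neg_one, ← Real.rpow_mul hb'.le, ← Real.rpow_add hb']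
  norm_num

lemma norm_b_lower (e u : ℝ) (he : 0 ≤ e) (hu : 0 < u) :
    4 ≤ ‖((e:ℂ) - 4 * Complex.I) + u‖ ∧ (1 + u) / 2 ≤ ‖((e:ℂ) - 4 * Complex.I) + u‖ := by
  have h1 := Complex.abs_im_le_norm (((e:ℂ) - 4 * Complex.I) + u)
  have h2 := Complex.abs_re_le_norm (((e:ℂ) - 4 * Complex.I) + u)
  simp at h1 h2
  rw [abs_of_nonneg (by linarith)] at h2
  constructor <;> linarith

lemma WW_bound (e u : ℝ) (he : 0 ≤ e) (hu : 0 < u) :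
    ‖WW (((e:ℂ) - 4 * Complex.I) + u)‖ ≤ 1 ∧ ‖WW (((e:ℂ) - 4 * Complex.I) + u)‖ ≤ BB u := by
  obtain ⟨h1, h2⟩ := norm_b_lower e u he hu
  rw [norm_WW _ (by rw [← norm_pos_iff]; linarith)]
  constructor
  · exact Real.rpow_le_one_of_one_le_of_nonpos (by linarith) (by norm_num)
  · refine (Real.rpow_le_rpow_of_nonpos (by positivity) h2 (by norm_num)).trans ?_
    unfold BB
    rw [Real.div_rpow (by positivity) (by positivity), Real.norm_of_nonneg hu.le,
      Real.rpow_neg (by norm_num : (0:ℝ) ≤ 2), div_inv_eq_mul, mul_comm]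

lemma BB_int : Integrable BB := by
  unfold BB
  apply Integrable.const_mul
  exact integrable_one_add_norm (by simp; norm_num)

lemma WW_meas : Measurable WW := by
  unfold WW
  fun_prop

lemma WW_cont (b : ℂ) (hb : b ≠ 0) (hb' : 0 < b.re) : ContinuousAt WW b := by
  unfold WW
  have h : ContinuousAt (fun b : ℂ => 1 / b) b := by fun_prop (disch := exact hb)
  refine h.mul (h.cpow continuousAt_const ?_)
  left
  rw [one_div, Complex.inv_re]
  have := Complex.normSq_pos.mpr hb
  positivity

noncomputable def DD (e : ℝ) (k : ℤ) (u : ℝ) : ℂ :=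
  (Real.exp (-(π * (k:ℝ) ^ 2) * u) : ℂ) * (WW (((e:ℂ) - 4 * Complex.I) + u) / (4 * π))

lemma DD_meas (e : ℝ) (k : ℤ) : Measurable (DD e k) := by
  unfold DD
  have := WW_meas
  fun_prop

lemma DD_norm (e : ℝ) (k : ℤ) (u : ℝ) : ‖DD e k u‖ =
    Real.exp (-(π * (k:ℝ) ^ 2) * u) * (‖WW (((e:ℂ) - 4 * Complex.I) + u)‖ / (4 * π)) := by
  unfold DD
  rw [norm_mul, norm_div, norm_mul]
  simp only [Complex.norm_real, Real.norm_eq_abs, Real.abs_exp]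
  rw [abs_of_pos Real.pi_pos]
  simp

lemma DD_b1 (e : ℝ) (he : 0 ≤ e) (k : ℤ) : ∀ u ∈ Ioi (0:ℝ), ‖DD e k u‖ ≤ BB u / (4 * π) := by
  intro u hu
  have hu' : 0 < u := hu
  have hpi := Real.pi_pos
  rw [DD_norm]
  have h1 : Real.exp (-(π * (k:ℝ) ^ 2) * u) ≤ 1 := by
    rw [Real.exp_le_one_iff, neg_mul, neg_nonpos]; positivity
  refine (mul_le_mul_of_nonneg_right h1 (by positivity)).trans ?_
  rw [one_mul]
  gcongr
  exact (WW_bound e u he hu').2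

lemma DD_b2 (e : ℝ) (he : 0 ≤ e) (k : ℤ) : ∀ u ∈ Ioi (0:ℝ), ‖DD e k u‖ ≤ Real.exp (-(π * (k:ℝ) ^ 2) * u) := by
  intro u hu
  have hu' : 0 < u := hu
  have hpi := Real.pi_gt_three
  rw [DD_norm]
  have h1 := (WW_bound e u he hu').1
  refine mul_le_of_le_one_right (Real.exp_pos _).le ?_
  rw [div_le_one (by positivity)]
  linarith

lemma DD_int (e : ℝ) (he : 0 ≤ e) (k : ℤ) : IntegrableOn (DD e k) (Ioi 0) := by
  refine (BB_int.div_const (4 * π)).integrableOn.mono' (DD_meas e k).aestronglyMeasurable ?_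
  exact (ae_restrict_iff' measurableSet_Ioi).mpr (Filter.Eventually.of_forall (DD_b1 e he k))

noncomputable def bd (k : ℤ) : ℝ := 1 / π * (1 / (k:ℝ) ^ 2) + if k = 0 then (∫ u in Ioi (0:ℝ), BB u / (4 * π)) else 0

lemma DD_sum_bound (e : ℝ) (he : 0 ≤ e) (k : ℤ) : ∫ u in Ioi (0:ℝ), ‖DD e k u‖ ≤ bd k := by
  unfold bd
  by_cases hk : k = 0
  · have := setIntegral_mono_on (DD_int e he k).norm (BB_int.div_const (4 * π)).integrableOn measurableSet_Ioi (DD_b1 e he k)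
    simpa [hk] using this
  · have hk2 : (0:ℝ) < (k:ℝ)^2 := by positivity
    have hneg : -(π * (k:ℝ) ^ 2) < 0 := by
      have := Real.pi_pos
      have : 0 < π * (k:ℝ) ^ 2 := by positivity
      linarith
    have := setIntegral_mono_on (DD_int e he k).norm (integrableOn_exp_mul_Ioi hneg 0) measurableSet_Ioi (DD_b2 e he k)
    rw [integral_exp_mul_Ioi hneg] at this
    simp only [hk, if_false, add_zero]
    refine this.trans (le_of_eq ?_)
    simp [neg_div, mul_comm]

lemma DD_tendsto : Filter.Tendsto (fun e : ℝ => ∑' k : ℤ, ∫ u in Ioi (0:ℝ), DD e k u) (nhdsWithin 0 (Ioi 0))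
    (nhds (∑' k : ℤ, ∫ u in Ioi (0:ℝ), DD 0 k u)) := by
  refine tendsto_tsum_of_dominated_convergence (bound := bd) (summable_one_add _ _) ?_ ?_
  · intro k
    refine tendsto_integral_filter_of_dominated_convergence (fun u => BB u / (4 * π)) ?_ ?_ ?_ ?_
    · exact Filter.Eventually.of_forall fun e => (DD_meas e k).aestronglyMeasurable
    · filter_upwards [self_mem_nhdsWithin] with e he
      exact (ae_restrict_iff' measurableSet_Ioi).mpr (Filter.Eventually.of_forall (DD_b1 e (le_of_lt he) k))
    · exact (BB_int.div_const (4 * π)).integrableOn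
    · refine (ae_restrict_iff' measurableSet_Ioi).mpr (Filter.Eventually.of_forall fun u hu => ?_)
      have hu' : 0 < u := hu
      refine Filter.Tendsto.mono_left ?_ nhdsWithin_le_nhds
      have h := norm_b_lower 0 u le_rfl hu'
      have : ContinuousAt (fun e : ℝ => DD e k u) 0 := by
        unfold DD
        have hW : ContinuousAt WW (((0:ℝ):ℂ) - 4 * Complex.I + u) := WW_cont _ (by rw [← norm_pos_iff]; linarith [h.1]) (by simpa using hu')
        have hc : ContinuousAt (fun e : ℝ => WW (((e:ℂ) - 4 * Complex.I) + u)) 0 :=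
          ContinuousAt.comp (f := fun e : ℝ => ((e:ℂ) - 4 * Complex.I) + u) hW (by fun_prop)
        exact continuousAt_const.mul (hc.div_const _)
      exact this
  · filter_upwards [self_mem_nhdsWithin] with e he k
    exact (norm_integral_le_integral_norm _).trans (DD_sum_bound e (le_of_lt he) k)

noncomputable def ph (t : ℝ) : ℝ := 2 * t / (Real.exp (2 * π * t) - 1)

lemma ph_bound (t : ℝ) (ht : 0 < t) : ‖ph t‖ ≤ 1 / π * Real.exp (-π * t) := by
  have hpi := Real.pi_pos
  have h1 : π * t ≤ Real.sinh (π * t) := Real.self_le_sinh_iff.mpr (by positivity)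
  have h2 : Real.exp (2 * π * t) - 1 = Real.exp (π * t) * (2 * Real.sinh (π * t)) := by
    rw [Real.sinh_eq]
    have : Real.exp (2 * π * t) = Real.exp (π * t) * Real.exp (π * t) := by
      rw [← Real.exp_add]; ring_nf
    have h3 : Real.exp (π * t) * Real.exp (-(π * t)) = 1 := by rw [← Real.exp_add]; simp
    rw [this]
    linear_combination h3
  unfold ph
  rw [h2]
  have hs : 0 < Real.sinh (π * t) := by have : 0 < π * t := by positivity
                                        linarith
  rw [Real.norm_of_nonneg (by positivity), div_le_iff₀ (by positivity)]
  have h3 : Real.exp (-π * t) * Real.exp (π * t) = 1 := by rw [← Real.exp_add]; simp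
  have : 1 / π * Real.exp (-π * t) * (Real.exp (π * t) * (2 * Real.sinh (π * t)))
    = 2 / π * Real.sinh (π * t) := by linear_combination (1 / π * (2 * Real.sinh (π * t))) * h3
  rw [this]
  calc 2 * t = 2 / π * (π * t) := by field_simp
    _ ≤ _ := by gcongr

lemma ph_meas : Measurable ph := by unfold ph; fun_prop

lemma phb_int : IntegrableOn (fun t : ℝ => 1 / π * Real.exp (-π * t)) (Ioi 0) :=
  (integrableOn_exp_mul_Ioi (by linarith [Real.pi_pos]) 0).const_mul _

lemma ph_int : IntegrableOn ph (Ioi 0) := by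
  refine phb_int.mono' ph_meas.aestronglyMeasurable ?_
  exact (ae_restrict_iff' measurableSet_Ioi).mpr (Filter.Eventually.of_forall ph_bound)

lemma G_bound (e : ℝ) (he : 0 ≤ e) (t : ℝ) (ht : 0 < t) :
    ‖Complex.exp (-(π * ((e:ℂ) - 4 * Complex.I)) * (t:ℂ) ^ 2) * (ph t : ℂ)‖ ≤ 1 / π * Real.exp (-π * t) := by
  rw [norm_mul, norm_gauss, Complex.norm_real]
  refine (mul_le_of_le_one_left (norm_nonneg _) ?_).trans (ph_bound t ht)
  rw [Real.exp_le_one_iff, neg_mul, neg_nonpos]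
  have := Real.pi_pos
  simp
  positivity

lemma G_tendsto : Filter.Tendsto (fun e : ℝ => ∫ t in Ioi (0:ℝ), Complex.exp (-(π * ((e:ℂ) - 4 * Complex.I)) * (t:ℂ) ^ 2) * (ph t : ℂ))
    (nhdsWithin 0 (Ioi 0)) (nhds (∫ t in Ioi (0:ℝ), Complex.exp (-(π * (((0:ℝ):ℂ) - 4 * Complex.I)) * (t:ℂ) ^ 2) * (ph t : ℂ))) := by
  refine tendsto_integral_filter_of_dominated_convergence _ ?_ ?_ phb_int ?_
  · have := ph_meas
    exact Filter.Eventually.of_forall fun e => Measurable.aestronglyMeasurable (by fun_prop)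
  · filter_upwards [self_mem_nhdsWithin] with e he
    exact (ae_restrict_iff' measurableSet_Ioi).mpr (Filter.Eventually.of_forall (G_bound e (le_of_lt he)))
  · refine Filter.Eventually.of_forall fun t => ?_
    refine Filter.Tendsto.mono_left ?_ nhdsWithin_le_nhds
    exact Continuous.tendsto (f := fun e : ℝ => Complex.exp (-(π * ((e:ℂ) - 4 * Complex.I)) * (t:ℂ) ^ 2) * (ph t : ℂ)) (by fun_prop) 0

lemma pre_eq (e : ℝ) (he : 0 < e) :
    (∫ t in Ioi (0:ℝ), Complex.exp (-(π * ((e:ℂ) - 4 * Complex.I)) * (t:ℂ) ^ 2) * (ph t : ℂ))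
      + (2 * (π * ((e:ℂ) - 4 * Complex.I)))⁻¹ = ∑' k : ℤ, ∫ u in Ioi (0:ℝ), DD e k u := by
  have hre : 0 < ((e:ℂ) - 4 * Complex.I).re := by simpa using he
  have h := (coth_int _ hre).tsum_eq
  simp only [c_eq _ hre] at h
  unfold DD
  rw [h, ← integral_mul_cexp_neg_mul_sq (re_pi_mul hre), ← integral_add]
  · refine setIntegral_congr_fun measurableSet_Ioi fun t ht => ?_
    simp only [ph]
    push_cast
    ring
  · have := ph_meas
    refine phb_int.mono' (Measurable.aestronglyMeasurable (by fun_prop)) ?_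
    exact (ae_restrict_iff' measurableSet_Ioi).mpr (Filter.Eventually.of_forall (G_bound e (le_of_lt he)))
  · exact (integrable_mul_cexp_neg_mul_sq (re_pi_mul hre)).integrableOn

lemma main_eq :
    (∫ t in Ioi (0:ℝ), Complex.exp (-(π * (((0:ℝ):ℂ) - 4 * Complex.I)) * (t:ℂ) ^ 2) * (ph t : ℂ))
      + (2 * (π * (((0:ℝ):ℂ) - 4 * Complex.I)))⁻¹ = ∑' k : ℤ, ∫ u in Ioi (0:ℝ), DD 0 k u := by
  refine tendsto_nhds_unique (G_tendsto.add (?_ : Filter.Tendsto (fun e : ℝ => (2 * (π * ((e:ℂ) - 4 * Complex.I)))⁻¹) _ _)) (DD_tendsto.congr' ?_)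
  · refine Filter.Tendsto.mono_left ?_ nhdsWithin_le_nhds
    have : ContinuousAt (fun e : ℝ => (2 * (π * ((e:ℂ) - 4 * Complex.I)))⁻¹) 0 := by
      apply ContinuousAt.inv₀ (by fun_prop)
      simp [Real.pi_ne_zero]
    exact this
  · filter_upwards [self_mem_nhdsWithin] with e he
    exact (pre_eq e he).symm

noncomputable def bb (u : ℝ) : ℂ := ((0:ℝ):ℂ) - 4 * Complex.I + u

noncomputable def TT (k : ℤ) (u : ℝ) : ℂ := (1 / bb u) ^ 2 * Complex.exp (-(π * (k:ℂ) ^ 2) * (1 / bb u))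

lemma bb_re (u : ℝ) : (bb u).re = u := by simp [bb]
lemma bb_im (u : ℝ) : (bb u).im = -4 := by simp [bb]
lemma bb_ne (u : ℝ) : bb u ≠ 0 := by
  intro h; have := congrArg Complex.im h; rw [bb_im] at this; norm_num at this
lemma bb_normSq (u : ℝ) : Complex.normSq (bb u) = u ^ 2 + 16 := by
  rw [Complex.normSq_apply, bb_re, bb_im]; ring

lemma theta_id (u : ℝ) (hu : 0 < u) :
    (∑' k : ℤ, (Real.exp (-(π * (k:ℝ) ^ 2) * u) : ℂ)) * WW (bb u) = ∑' k : ℤ, TT k u := by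
  have him : 0 < (Complex.I * bb u).im := by simp [bb_re, hu]
  let τ : UpperHalfPlane := ⟨Complex.I * bb u, him⟩
  have hτ : (τ : ℂ) = Complex.I * bb u := rfl
  have h1 : jacobiTheta τ = ∑' k : ℤ, (Real.exp (-(π * (k:ℝ) ^ 2) * u) : ℂ) := by
    have : (τ : ℂ) = 2 + (2 + Complex.I * u) := by
      rw [hτ, bb]; push_cast; linear_combination -4 * Complex.I_mul_I
    rw [this, jacobiTheta_two_add, jacobiTheta_two_add, jacobiTheta]
    refine tsum_congr fun k => ?_
    push_cast
    congr 1
    linear_combination (π * k ^ 2 * u : ℂ) * Complex.I_mul_I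
  have h2 := jacobiTheta_S_smul τ
  have hb := bb_ne u
  have e1 : -Complex.I * (τ:ℂ) = bb u := by
    rw [hτ]; linear_combination (-bb u) * Complex.I_mul_I
  rw [e1] at h2
  have hS : ((ModularGroup.S • τ : UpperHalfPlane) : ℂ) = Complex.I * (1 / bb u) := by
    rw [UpperHalfPlane.modular_S_smul]
    show (-(τ:ℂ))⁻¹ = _
    rw [hτ]
    have := Complex.I_ne_zero
    field_simp
    simp
  have h3 : jacobiTheta ((ModularGroup.S • τ : UpperHalfPlane) : ℂ) = ∑' k : ℤ, Complex.exp (-(π * (k:ℂ) ^ 2) * (1 / bb u)) := by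
    rw [hS, jacobiTheta]
    refine tsum_congr fun k => ?_
    congr 1
    linear_combination (π * k ^ 2 * (1 / bb u) : ℂ) * Complex.I_mul_I
  have h4 : (1 / bb u) ^ (1 / 2 : ℂ) * (bb u) ^ (1 / 2 : ℂ) = 1 := by
    rw [one_div, Complex.inv_cpow]
    · apply inv_mul_cancel₀
      rw [Ne, Complex.cpow_eq_zero_iff]; tauto
    · intro h
      rw [Complex.arg_eq_pi_iff, bb_re] at h
      linarith [h.1]
  have h5 : (1 / bb u) ^ (1 / 2 : ℂ) * (1 / bb u) ^ (1 / 2 : ℂ) = 1 / bb u := by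
    rw [← Complex.cpow_add _ _ (by simpa using hb)]
    norm_num
  unfold TT
  rw [tsum_mul_left, ← h1, ← h3, h2, WW]
  linear_combination (-(jacobiTheta τ) * (1 / bb u) * (1 / bb u) ^ (1 / 2 : ℂ)) * h4 * 0 +
    (-(jacobiTheta τ) * (1 / bb u) * (1 / bb u) ^ (1 / 2 : ℂ)) * h4 + (1 / bb u) * (bb u) ^ (1 / 2 : ℂ) * (jacobiTheta τ) * h5

lemma DD_theta : ∑' k : ℤ, ∫ u in Ioi (0:ℝ), DD 0 k u = (1 / (4 * π)) * ∫ u in Ioi (0:ℝ), ∑' k : ℤ, TT k u := by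
  have hs : Summable (fun k : ℤ => ∫ u in Ioi (0:ℝ), ‖DD 0 k u‖) :=
    Summable.of_nonneg_of_le (fun k => integral_nonneg fun u => norm_nonneg _)
      (DD_sum_bound 0 le_rfl) (summable_one_add _ _)
  rw [(hasSum_integral_of_summable_integral_norm (fun k => DD_int 0 le_rfl k) hs).tsum_eq, ← integral_const_mul]
  refine setIntegral_congr_fun measurableSet_Ioi fun u hu => ?_
  rw [← theta_id u hu]
  unfold DD
  rw [tsum_mul_right, bb]
  ring

lemma TT_norm (k : ℤ) (u : ℝ) : ‖TT k u‖ = 1 / (u ^ 2 + 16) * Real.exp (-(π * (k:ℝ) ^ 2 * (u / (u ^ 2 + 16)))) := by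
  unfold TT
  rw [norm_mul, Complex.norm_exp, norm_pow, norm_div, norm_one, div_pow, one_pow, ← Complex.normSq_eq_norm_sq, bb_normSq]
  congr 2
  have : -(π * (k:ℂ) ^ 2) = ((-(π * (k:ℝ) ^ 2) : ℝ) : ℂ) := by push_cast; rfl
  rw [this, Complex.re_ofReal_mul, one_div, Complex.inv_re, bb_re, bb_normSq]
  ring

lemma exp_neg_le (x : ℝ) (hx : 0 < x) : Real.exp (-x) ≤ x ^ (-(3 / 4) : ℝ) := by
  rw [Real.exp_neg, Real.rpow_neg hx.le]
  apply inv_anti₀ (by positivity)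
  rcases le_total x 1 with h | h
  · exact (Real.rpow_le_one hx.le h (by norm_num)).trans (Real.one_le_exp hx.le)
  · calc x ^ (3 / 4 : ℝ) ≤ x ^ (1:ℝ) := Real.rpow_le_rpow_of_exponent_le h (by norm_num)
      _ = x := Real.rpow_one x
      _ ≤ _ := by linarith [Real.add_one_le_exp x]

noncomputable def HH (u : ℝ) : ℝ := 1 / (u ^ 2 + 16) * (u / (u ^ 2 + 16)) ^ (-(3 / 4) : ℝ)

lemma HH_meas : Measurable HH := by unfold HH; fun_prop

lemma HH_int : IntegrableOn HH (Ioi 0) := by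
  have key : ∀ u : ℝ, 0 < u → HH u = (u ^ 2 + 16) ^ (-(1 / 4) : ℝ) * u ^ (-(3 / 4) : ℝ) := by
    intro u hu
    have h16 : 0 < u ^ 2 + 16 := by positivity
    unfold HH
    rw [Real.div_rpow hu.le h16.le, one_div, ← Real.rpow_neg_one, div_eq_mul_inv, ← Real.rpow_neg h16.le]
    rw [mul_left_comm, ← Real.rpow_add h16, mul_comm]
    norm_num
  rw [← Ioc_union_Ioi_eq_Ioi (zero_le_one' ℝ)]
  apply IntegrableOn.union
  · have h : IntegrableOn (fun u : ℝ => u ^ (-(3 / 4) : ℝ)) (Ioc 0 1) := by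
      rw [← intervalIntegrable_iff_integrableOn_Ioc_of_le zero_le_one]
      exact intervalIntegral.intervalIntegrable_rpow' (by norm_num)
    refine h.mono' HH_meas.aestronglyMeasurable ?_
    refine (ae_restrict_iff' measurableSet_Ioc).mpr (Filter.Eventually.of_forall fun u hu => ?_)
    have hu0 : 0 < u := hu.1
    rw [key u hu0, Real.norm_of_nonneg (by positivity)]
    refine mul_le_of_le_one_left (by positivity) ?_
    exact Real.rpow_le_one_of_one_le_of_nonpos (by nlinarith) (by norm_num)
  · have h : IntegrableOn (fun u : ℝ => u ^ (-(5 / 4) : ℝ)) (Ioi 1) :=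
      integrableOn_Ioi_rpow_of_lt (by norm_num) one_pos
    refine h.mono' HH_meas.aestronglyMeasurable ?_
    refine (ae_restrict_iff' measurableSet_Ioi).mpr (Filter.Eventually.of_forall fun u hu => ?_)
    have hu1 : 1 < u := hu
    have hu0 : 0 < u := by linarith
    rw [key u hu0, Real.norm_of_nonneg (by positivity)]
    have : u ^ (-(5 / 4) : ℝ) = (u ^ 2) ^ (-(1 / 4) : ℝ) * u ^ (-(3 / 4) : ℝ) := by
      rw [← Real.rpow_natCast, ← Real.rpow_mul hu0.le, ← Real.rpow_add hu0]; norm_num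
    rw [this]
    gcongr ?_ * _
    exact Real.rpow_le_rpow_of_nonpos (by positivity) (by linarith) (by norm_num)

lemma TT_b (k : ℤ) (hk : k ≠ 0) : ∀ u ∈ Ioi (0:ℝ), ‖TT k u‖ ≤ |(k:ℝ)| ^ (-(3 / 2) : ℝ) * HH u := by
  intro u hu
  have hu' : 0 < u := hu
  have hk2 : (0:ℝ) < |(k:ℝ)| := by positivity
  have hpi := Real.pi_gt_three
  rw [TT_norm]
  have hx : 0 < |(k:ℝ)| ^ 2 * (u / (u ^ 2 + 16)) := by positivity
  have h1 : Real.exp (-(π * (k:ℝ) ^ 2 * (u / (u ^ 2 + 16)))) ≤ Real.exp (-(|(k:ℝ)| ^ 2 * (u / (u ^ 2 + 16)))) := by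
    apply Real.exp_le_exp.mpr
    rw [sq_abs] at hx ⊢
    nlinarith
  have h2 := h1.trans (exp_neg_le _ hx)
  rw [Real.mul_rpow (by positivity) (by positivity), ← Real.rpow_natCast |(k:ℝ)|, ← Real.rpow_mul hk2.le] at h2
  norm_num at h2
  unfold HH
  calc _ ≤ 1 / (u ^ 2 + 16) * (|(k:ℝ)| ^ (-(3 / 2) : ℝ) * (u / (u ^ 2 + 16)) ^ (-(3 / 4) : ℝ)) := by
        refine mul_le_mul_of_nonneg_left ?_ (by positivity)
        convert h2 using 4 
    _ = _ := by ring

lemma TT_cont (k : ℤ) : Continuous (TT k) := by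
  unfold TT
  have : Continuous (fun u => 1 / bb u) := by
    apply Continuous.div continuous_const _ bb_ne
    unfold bb; fun_prop
  fun_prop

lemma TT_b0 : ∀ u ∈ Ioi (0:ℝ), ‖TT 0 u‖ ≤ 1 * HH u + (1 + u ^ 2)⁻¹ := by
  intro u hu
  have hu' : 0 < u := hu
  rw [TT_norm]
  have : 0 ≤ HH u := by unfold HH; positivity
  have h2 : 1 / (u ^ 2 + 16) ≤ (1 + u ^ 2)⁻¹ := by
    rw [one_div]; apply inv_anti₀ (by positivity); linarith
  simp at h2 ⊢
  linarith

lemma TT_int (k : ℤ) : IntegrableOn (TT k) (Ioi 0) := by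
  by_cases hk : k = 0
  · subst hk
    refine ((HH_int.const_mul 1).add integrable_inv_one_add_sq.integrableOn).mono' (TT_cont 0).aestronglyMeasurable ?_
    exact (ae_restrict_iff' measurableSet_Ioi).mpr (Filter.Eventually.of_forall TT_b0)
  · refine (HH_int.const_mul (|(k:ℝ)| ^ (-(3 / 2) : ℝ))).mono' (TT_cont k).aestronglyMeasurable ?_
    exact (ae_restrict_iff' measurableSet_Ioi).mpr (Filter.Eventually.of_forall (TT_b k hk))

lemma TT_sum : HasSum (fun k : ℤ => ∫ u in Ioi (0:ℝ), TT k u) (∫ u in Ioi (0:ℝ), ∑' k : ℤ, TT k u) := by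
  refine hasSum_integral_of_summable_integral_norm TT_int ?_
  have hs : Summable (fun k : ℤ => |(k:ℝ)| ^ (-(3 / 2) : ℝ) * (∫ u in Ioi (0:ℝ), HH u)
      + if k = 0 then (∫ u in Ioi (0:ℝ), ‖TT 0 u‖) else 0) := by
    apply Summable.add
    · apply Summable.mul_right
      exact Real.summable_abs_int_rpow (by norm_num)
    · exact summable_of_ne_finset_zero (s := {0}) (by intro b hb; simp at hb; simp [hb])
  refine Summable.of_nonneg_of_le (fun k => integral_nonneg fun u => norm_nonneg _) (fun k => ?_) hs
  by_cases hk : k = 0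
  · subst hk
    simp
  · simp only [hk, if_false, add_zero]
    rw [← integral_const_mul]
    exact setIntegral_mono_on (TT_int k).norm (HH_int.const_mul _) measurableSet_Ioi (TT_b k hk)

lemma bb_tendsto : Filter.Tendsto (fun u : ℝ => 1 / bb u) Filter.atTop (nhds 0) := by
  rw [tendsto_zero_iff_norm_tendsto_zero]
  refine squeeze_zero' (Filter.Eventually.of_forall fun u => norm_nonneg _) ?_ tendsto_inv_atTop_zero
  filter_upwards [Filter.eventually_gt_atTop 0] with u hu
  rw [norm_div, norm_one, one_div]
  apply inv_anti₀ hu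
  have := Complex.abs_re_le_norm (bb u)
  rw [bb_re] at this
  exact (le_abs_self u).trans this

lemma bb_deriv (u : ℝ) : HasDerivAt (fun u : ℝ => 1 / bb u) (-(1 / bb u) ^ 2) u := by
  have h : HasDerivAt bb 1 u := by
    have : HasDerivAt (fun u : ℝ => (u:ℂ)) 1 u := Complex.ofRealCLM.hasDerivAt
    unfold bb
    exact this.const_add _
  have := h.inv (bb_ne u)
  simp only [one_div]
  convert! this using 1
  field_simp

lemma TT_val0 : ∫ u in Ioi (0:ℝ), TT 0 u = Complex.I / 4 := by
  have h := integral_Ioi_of_hasDerivAt_of_tendsto' (a := 0) (f := fun u => -(1 / bb u)) (f' := TT 0) (m := 0) ?_ (TT_int 0) (by simpa using bb_tendsto.neg)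
  · rw [h]; simp [bb]; field_simp
  · intro x _
    convert! (bb_deriv x).neg using 1
    simp [TT]

lemma TT_val (k : ℤ) (hk : k ≠ 0) : ∫ u in Ioi (0:ℝ), TT k u = (1 - Complex.exp (-(π * (k:ℂ) ^ 2) * (Complex.I / 4))) / (π * (k:ℂ) ^ 2) := by
  have hk' : (k:ℂ) ≠ 0 := by exact_mod_cast hk
  have hpc : (π:ℂ) ≠ 0 := by exact_mod_cast Real.pi_ne_zero
  have ht : Filter.Tendsto (fun u : ℝ => Complex.exp (-(π * (k:ℂ) ^ 2) * (1 / bb u)) / (π * (k:ℂ) ^ 2)) Filter.atTop (nhds (1 / (π * (k:ℂ) ^ 2))) := by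
    have := ((bb_tendsto.const_mul (-(π * (k:ℂ) ^ 2))).cexp).div_const (π * (k:ℂ) ^ 2)
    simpa using this
  have h := integral_Ioi_of_hasDerivAt_of_tendsto' (a := 0) (f' := TT k) ?_ (TT_int k) ht
  · rw [h, sub_div]
    have : 1 / bb 0 = Complex.I / 4 := by simp [bb]; field_simp
    simp only [this]
  · intro x _
    have := (((bb_deriv x).const_mul (-(π * (k:ℂ) ^ 2))).cexp).div_const (π * (k:ℂ) ^ 2)
    convert! this using 1
    unfold TT
    field_simp

lemma zeta_mul (m : ℕ) (hm : 0 < m) :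
    HasSum (fun n : ℕ => if m ∣ n then 1 / (n:ℝ) ^ 2 else 0) (π ^ 2 / 6 / (m:ℝ) ^ 2) := by
  have hinj : Function.Injective (fun n : ℕ => m * n) := fun a b h => Nat.eq_of_mul_eq_mul_left hm h
  rw [← hinj.hasSum_iff]
  · have := hasSum_zeta_two.div_const ((m:ℝ) ^ 2)
    refine this.congr_fun ?_ |> fun h => h
    intro n
    simp [Function.comp]
    ring
  · intro n hn
    rw [if_neg]
    rintro ⟨c, rfl⟩
    exact hn ⟨c, rfl⟩

lemma q_eq (n : ℕ) : (1 - Real.cos (π * (n:ℝ) ^ 2 / 4)) / (π * (n:ℝ) ^ 2) =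
    1 / π * ((1 - √2 / 2) * (if 1 ∣ n then 1 / (n:ℝ) ^ 2 else 0) + (1 + √2 / 2) * (if 2 ∣ n then 1 / (n:ℝ) ^ 2 else 0)
      + (-2) * (if 4 ∣ n then 1 / (n:ℝ) ^ 2 else 0)) := by
  have hpi := Real.pi_ne_zero
  rw [if_pos (one_dvd n)]
  by_cases h2 : 2 ∣ n
  · by_cases h4 : 4 ∣ n
    · obtain ⟨m, rfl⟩ := h4
      have : Real.cos (π * ((4 * m : ℕ):ℝ) ^ 2 / 4) = 1 := by
        have e : π * ((4 * m : ℕ):ℝ) ^ 2 / 4 = 0 + ((2 * m ^ 2 : ℕ):ℝ) * (2 * π) := by push_cast; ring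
        rw [e, Real.cos_add_nat_mul_two_pi, Real.cos_zero]
      rw [this, if_pos h2, if_pos (Dvd.intro m rfl)]
      ring
    · rw [if_pos h2, if_neg h4]
      obtain ⟨m, rfl⟩ : ∃ m, n = 4 * m + 2 := ⟨n / 4, by omega⟩
      have : Real.cos (π * ((4 * m + 2 : ℕ):ℝ) ^ 2 / 4) = -1 := by
        have e : π * ((4 * m + 2 : ℕ):ℝ) ^ 2 / 4 = π + ((2 * m ^ 2 + 2 * m : ℕ):ℝ) * (2 * π) := by push_cast; ring
        rw [e, Real.cos_add_nat_mul_two_pi, Real.cos_pi]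
      rw [this]
      have : ((4 * m + 2 : ℕ):ℝ) ≠ 0 := by positivity
      field_simp
      ring
  · rw [if_neg h2, if_neg (by omega)]
    obtain ⟨m, rfl⟩ : ∃ m, n = 2 * m + 1 := ⟨n / 2, by omega⟩
    obtain ⟨j, hj⟩ : 2 ∣ m * (m + 1) := (Nat.even_mul_succ_self m).two_dvd
    have hj' : (m:ℝ) * (m + 1) = 2 * j := by exact_mod_cast hj
    have : Real.cos (π * ((2 * m + 1 : ℕ):ℝ) ^ 2 / 4) = √2 / 2 := by
      have e : π * ((2 * m + 1 : ℕ):ℝ) ^ 2 / 4 = π / 4 + (j:ℝ) * (2 * π) := by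
        push_cast; linear_combination π * hj'
      rw [e, Real.cos_add_nat_mul_two_pi, Real.cos_pi_div_four]
    rw [this]
    have : ((2 * m + 1 : ℕ):ℝ) ≠ 0 := by positivity
    field_simp
    ring

lemma q_sum : HasSum (fun n : ℕ => (1 - Real.cos (π * (n:ℝ) ^ 2 / 4)) / (π * (n:ℝ) ^ 2)) (π * (3 - √2) / 16) := by
  have h := ((((zeta_mul 1 one_pos).mul_left (1 - √2 / 2)).add ((zeta_mul 2 two_pos).mul_left (1 + √2 / 2))).add
    ((zeta_mul 4 four_pos).mul_left (-2))).mul_left (1 / π)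
  have hpi := Real.pi_ne_zero
  simp only [q_eq]
  convert! h using 1
  field_simp
  push_cast
  ring

lemma TT_re (k : ℤ) : (∫ u in Ioi (0:ℝ), TT k u).re = (1 - Real.cos (π * (k:ℝ) ^ 2 / 4)) / (π * (k:ℝ) ^ 2) := by
  by_cases hk : k = 0
  · subst hk
    rw [TT_val0]
    simp
  · rw [TT_val k hk]
    have e : ((π:ℂ) * (k:ℂ) ^ 2) = ((π * (k:ℝ) ^ 2 : ℝ) : ℂ) := by push_cast; rfl
    have e2 : -((π:ℂ) * (k:ℂ) ^ 2) * (Complex.I / 4) = ((-(π * (k:ℝ) ^ 2 / 4) : ℝ) : ℂ) * Complex.I := by push_cast; ring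
    rw [e2, e, Complex.div_ofReal_re, Complex.sub_re, Complex.exp_ofReal_mul_I_re, Real.cos_neg, Complex.one_re]

lemma TT_total : (∫ u in Ioi (0:ℝ), ∑' k : ℤ, TT k u).re = π * (3 - √2) / 8 := by
  have h := Complex.hasSum_re TT_sum
  simp only [TT_re] at h
  rw [← h.tsum_eq, tsum_int_eq_zero_add_two_mul_tsum_pnat (by intro k; simp) h.summable]
  have := tsum_pnat_eq_tsum_of_eq_zero (f := fun n : ℕ => (1 - Real.cos (π * (n:ℝ) ^ 2 / 4)) / (π * (n:ℝ) ^ 2)) (by simp)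
  simp only [Int.cast_natCast]
  rw [this, q_sum.tsum_eq]
  simp
  ring

lemma ph_cos_integrable : IntegrableOn (fun t : ℝ => Real.cos (4 * π * t ^ 2) * ph t) (Ioi 0) := by
  have := ph_meas
  refine phb_int.mono' (Measurable.aestronglyMeasurable (by fun_prop)) ?_
  refine (ae_restrict_iff' measurableSet_Ioi).mpr (Filter.Eventually.of_forall fun t ht => ?_)
  rw [norm_mul]
  refine (mul_le_of_le_one_left (norm_nonneg _) ?_).trans (ph_bound t ht)
  exact Real.abs_cos_le_one _

lemma ph_cos_integral : ∫ t in Ioi (0:ℝ), Real.cos (4 * π * t ^ 2) * ph t = (3 - √2) / 32 := by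
  have h := congrArg Complex.re main_eq
  rw [DD_theta, Complex.add_re] at h
  have e1 : (1 / (4 * π) : ℂ) = ((1 / (4 * π) : ℝ) : ℂ) := by push_cast; rfl
  rw [e1, Complex.re_ofReal_mul, TT_total] at h
  have e2 : ((2 * (π * (((0:ℝ):ℂ) - 4 * Complex.I)))⁻¹).re = 0 := by
    rw [Complex.inv_re]; simp
  rw [e2, add_zero] at h
  have hint : IntegrableOn (fun t : ℝ => Complex.exp (-(π * (((0:ℝ):ℂ) - 4 * Complex.I)) * (t:ℂ) ^ 2) * (ph t : ℂ)) (Ioi 0) := by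
    have := ph_meas
    refine phb_int.mono' (Measurable.aestronglyMeasurable (by fun_prop)) ?_
    exact (ae_restrict_iff' measurableSet_Ioi).mpr (Filter.Eventually.of_forall (G_bound 0 le_rfl))
  have e3 := integral_re hint
  simp only [RCLike.re_eq_complex_re] at e3
  rw [← e3] at h
  have hpi := Real.pi_ne_zero
  calc _ = _ := ?_
    _ = _ := h
    _ = _ := by field_simp; ring
  refine setIntegral_congr_fun measurableSet_Ioi fun t _ => ?_
  have e4 : -(π * (((0:ℝ):ℂ) - 4 * Complex.I)) * (t:ℂ) ^ 2 = ((4 * π * t ^ 2 : ℝ) : ℂ) * Complex.I := by push_cast; ring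
  rw [e4, Complex.re_mul_ofReal, Complex.exp_ofReal_mul_I_re]

lemma cov (t : ℝ) (ht : t ∈ Ioi (0:ℝ)) :
    (|(2:ℝ)| * t ^ ((2:ℝ) - 1)) • (fun x : ℝ => Real.cos (4 * π * x) / (Real.exp (2 * π * Real.sqrt x) - 1)) (t ^ (2:ℝ))
    = Real.cos (4 * π * t ^ 2) * ph t := by
  have ht' : 0 < t := ht
  have : (2:ℝ) - 1 = 1 := by norm_num
  rw [this, Real.rpow_one, Real.rpow_two]
  simp only [Real.sqrt_sq ht'.le, ph, smul_eq_mul, abs_two]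
  ring

/-- Ramanujan's integral `R_C(0, 4)` converges and equals `(3 - √2)/32`. -/
theorem ramanujan_RC_zero_four :
    IntegrableOn
      (fun x : ℝ => Real.cos (4 * π * x) / (Real.exp (2 * π * Real.sqrt x) - 1)) (Ioi 0) ∧
    (∫ x in Ioi (0:ℝ), Real.cos (4 * π * x) / (Real.exp (2 * π * Real.sqrt x) - 1)) =
      (3 - Real.sqrt 2) / 32 := by
  constructor
  · rw [← integrableOn_Ioi_comp_rpow_iff _ (two_ne_zero' ℝ)]
    exact (integrableOn_congr_fun cov measurableSet_Ioi).mpr ph_cos_integrable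
  · rw [← ph_cos_integral, ← integral_comp_rpow_Ioi _ (two_ne_zero' ℝ)]
    exact setIntegral_congr_fun measurableSet_Ioi cov
end

section
/- The integral R_C(0, 6) = ∫_0^∞ cos(6πx)/(exp(2π√x) − 1) dx converges and equals (13 − 4√3)/144. -/
open MeasureTheory Real Set

noncomputable def rcQ (n d : ℂ → ℂ) (z : ℂ) : ℂ := by
  classical exact if d z = 0 then deriv n z / deriv d z else n z / d z

lemma rcQ_diff (n d : ℂ → ℂ) (hn : Differentiable ℂ n) (hd : Differentiable ℂ d) (a : ℂ)
    (h : d a = 0 → n a = 0 ∧ deriv d a ≠ 0) : DifferentiableAt ℂ (rcQ n d) a := by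
  by_cases h0 : d a = 0
  · obtain ⟨hna, hda⟩ := h h0
    have hn' : Differentiable ℂ (dslope n a) := by
      rw [← differentiableOn_univ] at hn ⊢
      exact (Complex.differentiableOn_dslope Filter.univ_mem).2 hn
    have hd' : Differentiable ℂ (dslope d a) := by
      rw [← differentiableOn_univ] at hd ⊢
      exact (Complex.differentiableOn_dslope Filter.univ_mem).2 hd
    have hne : dslope d a a ≠ 0 := by rwa [dslope_same]
    have hdiff : DifferentiableAt ℂ (fun z => dslope n a z / dslope d a z) a :=
      (hn' a).div (hd' a) hne
    refine hdiff.congr_of_eventuallyEq ?_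
    have hev := (hd' a).continuousAt.eventually_ne hne
    filter_upwards [hev] with z hz
    by_cases hza : z = a
    · subst hza
      simp [rcQ, h0]
    · have hsub : z - a ≠ 0 := sub_ne_zero.2 hza
      have e1 : n z = (z - a) * dslope n a z := by
        have := sub_smul_dslope n a z
        simp only [smul_eq_mul, hna, sub_zero] at this
        exact this.symm
      have e2 : d z = (z - a) * dslope d a z := by
        have := sub_smul_dslope d a z
        simp only [smul_eq_mul, h0, sub_zero] at this
        exact this.symm
      have hdz : d z ≠ 0 := by rw [e2]; exact mul_ne_zero hsub hz
      simp only [rcQ, hdz, if_false]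
      rw [e1, e2]
      field_simp
  · have hdiff : DifferentiableAt ℂ (fun z => n z / d z) a := (hn a).div (hd a) h0
    refine hdiff.congr_of_eventuallyEq ?_
    filter_upwards [(hd a).continuousAt.eventually_ne h0] with z hz
    simp [rcQ, hz]

lemma rcQ_of_ne (n d : ℂ → ℂ) (z : ℂ) (h : d z ≠ 0) : rcQ n d z = n z / d z := by
  simp [rcQ, h]

lemma rcQ_of_eq (n d : ℂ → ℂ) (z : ℂ) (h : d z = 0) : rcQ n d z = deriv n z / deriv d z := by
  simp [rcQ, h]

noncomputable def rcW (z : ℂ) : ℂ := Complex.exp (-2 * π * z)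
noncomputable def rcE (z : ℂ) : ℂ := Complex.exp (6 * π * Complex.I * z ^ 2)
noncomputable def rcs : ℂ := ((√3 : ℝ) : ℂ)
noncomputable def rcP (w : ℂ) : ℂ := (1 - Complex.I) * rcs / 6 *
  ((1 + w ^ 6) / 2 + (rcs + Complex.I) / 2 * (w + w ^ 5)
    + (-1 + Complex.I * rcs) / 2 * (w ^ 2 + w ^ 4) - Complex.I * w ^ 3)

noncomputable def rcn (z : ℂ) : ℂ := rcE z - rcP (rcW z)
noncomputable def rcd (z : ℂ) : ℂ := 1 - rcW z ^ 6

lemma rcs_sq : rcs ^ 2 = 3 := by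
  rw [rcs, ← Complex.ofReal_pow, Real.sq_sqrt (by norm_num)]; norm_num

lemma exp_pi6 : Complex.exp (π * Complex.I / 6) = (rcs + Complex.I) / 2 := by
  have : (π * Complex.I / 6 : ℂ) = ((π / 6 : ℝ) : ℂ) * Complex.I := by push_cast; ring
  rw [this, Complex.exp_mul_I, ← Complex.ofReal_cos, ← Complex.ofReal_sin, Real.cos_pi_div_six,
    Real.sin_pi_div_six, rcs]
  push_cast; ring

lemma exp_pi6' : Complex.exp (-(π * Complex.I / 6)) = (rcs - Complex.I) / 2 := by
  have : (-(π * Complex.I / 6) : ℂ) = ((-(π / 6) : ℝ) : ℂ) * Complex.I := by push_cast; ring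
  rw [this, Complex.exp_mul_I, ← Complex.ofReal_cos, ← Complex.ofReal_sin, Real.cos_neg,
    Real.sin_neg, Real.cos_pi_div_six, Real.sin_pi_div_six, rcs]
  push_cast; ring

lemma rcW_deriv (z : ℂ) : HasDerivAt rcW (-2 * π * rcW z) z := by
  have := ((hasDerivAt_id z).const_mul (-2 * π : ℂ)).cexp
  simp only [id, mul_one] at this
  rw [mul_comm]; exact this

lemma rcE_deriv (z : ℂ) : HasDerivAt rcE (12 * π * Complex.I * z * rcE z) z := by
  have := (((hasDerivAt_id z).pow 2).const_mul (6 * π * Complex.I : ℂ)).cexp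
  simp only [id] at this
  refine this.congr_deriv ?_
  rw [rcE]; push_cast; simp; ring

lemma rc_vanish (z : ℂ) (h : rcd z = 0) : rcn z = 0 := by
  have h1 : Complex.exp (-12 * π * z) = 1 := by
    have : rcW z ^ 6 = Complex.exp (-12 * π * z) := by
      rw [rcW, ← Complex.exp_nat_mul]; congr 1; push_cast; ring
    rw [← this]; rw [rcd] at h; linear_combination -h
  obtain ⟨m, hm⟩ := Complex.exp_eq_one_iff.1 h1
  have hpi : (π : ℂ) ≠ 0 := by exact_mod_cast Real.pi_ne_zero
  have hz : z = -(m * Complex.I / 6) := by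
    have : (π : ℂ) * (12 * (z + m * Complex.I / 6)) = 0 := by linear_combination -hm
    have := (mul_eq_zero.1 this).resolve_left hpi
    linear_combination this / 12
  obtain ⟨q, r, hr, hmr⟩ : ∃ q : ℤ, ∃ r : ℕ, r < 6 ∧ m = 6 * q + r :=
    ⟨m / 6, (m % 6).toNat, by omega, by omega⟩
  have hE : rcE z = ((rcs - Complex.I) / 2) ^ (r ^ 2) := by
    rw [← exp_pi6', ← Complex.exp_nat_mul, rcE, Complex.exp_eq_exp_iff_exists_int]
    refine ⟨-(3 * q ^ 2 + q * r), ?_⟩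
    rw [hz, hmr]; push_cast
    linear_combination (6 * π * Complex.I * ((6 * q + r) / 6) ^ 2 : ℂ) * Complex.I_sq
  have hW : rcW z = ((rcs + Complex.I) / 2) ^ (2 * r) := by
    rw [← exp_pi6, ← Complex.exp_nat_mul, rcW, Complex.exp_eq_exp_iff_exists_int]
    refine ⟨q, ?_⟩
    rw [hz, hmr]; push_cast; ring
  rw [rcn, hE, hW]
  have hs := rcs_sq
  have hI := Complex.I_sq
  have hs' : ((rcs + Complex.I) / 2) ^ 2 = (1 + Complex.I * rcs) / 2 := by
    linear_combination hs / 4 + hI / 4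
  have hs'' : ((rcs - Complex.I) / 2) ^ 2 = (1 - Complex.I * rcs) / 2 := by
    linear_combination hs / 4 + hI / 4
  have w2 : ((1 + Complex.I * rcs) / 2) ^ 2 = (-1 + Complex.I * rcs) / 2 := by
    linear_combination hI * rcs ^ 2 / 4 - hs / 4
  have w3 : ((1 + Complex.I * rcs) / 2) ^ 3 = -1 := by
    rw [pow_succ, w2]; linear_combination hI * rcs ^ 2 / 4 - hs / 4
  have v3 : ((rcs - Complex.I) / 2) ^ 3 = - Complex.I := by
    rw [pow_succ, hs'']; linear_combination hI * rcs / 4 - Complex.I * hs / 4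
  rw [pow_mul, hs', rcP]
  generalize hA : (1 + Complex.I * rcs) / 2 = A at *
  generalize hB : (rcs - Complex.I) / 2 = B at *
  generalize Complex.I = i at *
  generalize rcs = s at *
  clear hE hW hz hm h1 h hmr
  have hB25 : B ^ 25 = B := by
    rw [show B ^ 25 = (B ^ 3) ^ 8 * B by ring, v3, show (-i) ^ 8 = (i ^ 2) ^ 4 by ring, hI]; ring
  have hA5 : A ^ 5 = -A ^ 2 := by rw [show A ^ 5 = A ^ 3 * A ^ 2 by ring, w3]; ring
  by_cases hr5 : r = 5
  · subst hr5
    norm_num only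
    rw [hB25, hA5, w2]
    subst hB
    clear hA hs' hs'' w2 w3 v3 hB25 hA5
    grind
  · interval_cases r <;> grind

lemma rcpi_ne : (π : ℂ) ≠ 0 := by exact_mod_cast Real.pi_ne_zero
lemma rcW_ne (z : ℂ) : rcW z ≠ 0 := Complex.exp_ne_zero _

lemma rcW_add (z : ℂ) : rcW (z + Complex.I) = rcW z := by
  rw [rcW, rcW, Complex.exp_eq_exp_iff_exists_int]
  exact ⟨-1, by push_cast; ring⟩

lemma rcW_sub (z : ℂ) : rcW (Complex.I - z) = (rcW z)⁻¹ := by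
  rw [rcW, rcW, ← Complex.exp_neg, Complex.exp_eq_exp_iff_exists_int]
  exact ⟨-1, by push_cast; ring⟩

lemma rcW_pow (z : ℂ) : rcW z ^ 6 = Complex.exp (-12 * π * z) := by
  rw [rcW, ← Complex.exp_nat_mul]; congr 1; push_cast; ring

lemma rcE_add (z : ℂ) : rcE (z + Complex.I) = rcE z * rcW z ^ 6 := by
  rw [rcW_pow, rcE, rcE, ← Complex.exp_add, Complex.exp_eq_exp_iff_exists_int]
  refine ⟨-3, ?_⟩
  push_cast
  linear_combination (12 * π * z + 6 * π * Complex.I) * Complex.I_sq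

lemma rcE_sub (z : ℂ) : rcE (Complex.I - z) = rcE z * (rcW z)⁻¹ ^ 6 := by
  rw [inv_pow, rcW_pow, rcE, rcE, ← Complex.exp_neg, ← Complex.exp_add,
    Complex.exp_eq_exp_iff_exists_int]
  refine ⟨-3, ?_⟩
  push_cast
  linear_combination (-12 * π * z + 6 * π * Complex.I) * Complex.I_sq

noncomputable def rcR (w : ℂ) : ℂ := (1 - Complex.I) * rcs / 6 *
  ((6 * w ^ 6) / 2 + (rcs + Complex.I) / 2 * (w + 5 * w ^ 5)
    + (-1 + Complex.I * rcs) / 2 * (2 * w ^ 2 + 4 * w ^ 4) - Complex.I * (3 * w ^ 3))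
noncomputable def rcR2 (w : ℂ) : ℂ := (1 - Complex.I) * rcs / 6 *
  ((36 * w ^ 6) / 2 + (rcs + Complex.I) / 2 * (w + 25 * w ^ 5)
    + (-1 + Complex.I * rcs) / 2 * (4 * w ^ 2 + 16 * w ^ 4) - Complex.I * (9 * w ^ 3))

lemma rcWpow_deriv (k : ℕ) (z : ℂ) :
    HasDerivAt (fun z => rcW z ^ (k + 1)) (-2 * π * ((k + 1) * rcW z ^ (k + 1))) z := by
  refine ((rcW_deriv z).pow (k + 1)).congr_deriv ?_
  push_cast; simp; ring

lemma rcP_deriv (z : ℂ) : HasDerivAt (fun z => rcP (rcW z)) (-2 * π * rcR (rcW z)) z := by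
  have h1 := rcW_deriv z
  have h2 := rcWpow_deriv 1 z
  have h3 := rcWpow_deriv 2 z
  have h4 := rcWpow_deriv 3 z
  have h5 := rcWpow_deriv 4 z
  have h6 := rcWpow_deriv 5 z
  norm_num only at h2 h3 h4 h5 h6
  have := (((((h6.const_add 1).div_const 2).add ((h1.add h5).const_mul ((rcs + Complex.I) / 2))).add
    ((h2.add h4).const_mul ((-1 + Complex.I * rcs) / 2))).sub
      (h3.const_mul Complex.I)).const_mul ((1 - Complex.I) * rcs / 6)
  refine HasDerivAt.congr_deriv (f := fun z => rcP (rcW z)) this ?_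
  rw [rcR]; push_cast; ring

lemma rcR_deriv (z : ℂ) : HasDerivAt (fun z => rcR (rcW z)) (-2 * π * rcR2 (rcW z)) z := by
  have h1 := rcW_deriv z
  have h2 := rcWpow_deriv 1 z
  have h3 := rcWpow_deriv 2 z
  have h4 := rcWpow_deriv 3 z
  have h5 := rcWpow_deriv 4 z
  have h6 := rcWpow_deriv 5 z
  norm_num only at h2 h3 h4 h5 h6
  have := (((((h6.const_mul 6).div_const 2).add
    ((h1.add (h5.const_mul 5)).const_mul ((rcs + Complex.I) / 2))).add
    (((h2.const_mul 2).add (h4.const_mul 4)).const_mul ((-1 + Complex.I * rcs) / 2))).sub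
      ((h3.const_mul 3).const_mul Complex.I)).const_mul ((1 - Complex.I) * rcs / 6)
  refine HasDerivAt.congr_deriv (f := fun z => rcR (rcW z)) this ?_
  rw [rcR2]; push_cast; ring

lemma rcd_deriv (z : ℂ) : HasDerivAt rcd (12 * π * rcW z ^ 6) z := by
  have h6 := rcWpow_deriv 5 z
  norm_num only at h6
  refine HasDerivAt.congr_deriv (f := rcd) (h6.const_sub 1) ?_
  push_cast; ring

lemma rcn_deriv (z : ℂ) :
    HasDerivAt rcn (12 * π * Complex.I * z * rcE z + 2 * π * rcR (rcW z)) z := by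
  refine HasDerivAt.congr_deriv (f := rcn) ((rcE_deriv z).sub (rcP_deriv z)) ?_
  ring

lemma rcd_deriv_ne (z : ℂ) : 12 * π * rcW z ^ 6 ≠ 0 :=
  mul_ne_zero (mul_ne_zero (by norm_num) rcpi_ne) (pow_ne_zero _ (rcW_ne z))

noncomputable def rcB : ℂ → ℂ := rcQ rcn rcd

lemma rcB_diff : Differentiable ℂ rcB := fun z =>
  rcQ_diff rcn rcd (fun z => (rcn_deriv z).differentiableAt)
    (fun z => (rcd_deriv z).differentiableAt) z
    (fun h => ⟨rc_vanish z h, by rw [(rcd_deriv z).deriv]; exact rcd_deriv_ne z⟩)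

lemma rcB_mul (z : ℂ) : rcB z * rcd z = rcn z := by
  by_cases h : rcd z = 0
  · rw [h, rc_vanish z h, mul_zero]
  · rw [rcB, rcQ_of_ne _ _ _ h, div_mul_cancel₀ _ h]

lemma rc_zero (F : ℂ → ℂ) (hF : Continuous F) (h : ∀ z, F z * rcd z = 0) (z : ℂ) : F z = 0 := by
  have h1 : ∀ᶠ x in nhdsWithin z {z}ᶜ, rcd x ≠ 0 := (rcd_deriv z).eventually_ne (rcd_deriv_ne z)
  have h2 : Filter.Tendsto F (nhdsWithin z {z}ᶜ) (nhds (F z)) :=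
    hF.continuousAt.tendsto.mono_left nhdsWithin_le_nhds
  have h3 : Filter.Tendsto F (nhdsWithin z {z}ᶜ) (nhds 0) := by
    refine tendsto_const_nhds.congr' ?_
    filter_upwards [h1] with x hx
    exact ((mul_eq_zero.1 (h x)).resolve_right hx).symm
  exact tendsto_nhds_unique h2 h3

lemma rcB_add (z : ℂ) : rcB (z + Complex.I) = rcB z - rcE z := by
  have hc := rcB_diff.continuous
  have hE : Continuous rcE :=
    continuous_iff_continuousAt.2 fun z => (rcE_deriv z).continuousAt
  have := rc_zero (fun z => rcB (z + Complex.I) - rcB z + rcE z) (by fun_prop) (fun z => by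
    have h1 := rcB_mul z
    have h2 := rcB_mul (z + Complex.I)
    simp only [rcd, rcn, rcW_add, rcE_add] at h1 h2 ⊢
    linear_combination h2 - h1) z
  linear_combination this

lemma rcB_sub (z : ℂ) : rcB (Complex.I - z) = - rcB z := by
  have hc := rcB_diff.continuous
  have := rc_zero (fun z => rcB (Complex.I - z) + rcB z) (by fun_prop) (fun z => by
    have h1 := rcB_mul z
    have h2 := rcB_mul (Complex.I - z)
    have hw := rcW_ne z
    simp only [rcd, rcn, rcW_sub, rcE_sub, rcP] at h1 h2 ⊢
    have hw6 : rcW z ^ 6 * (rcW z)⁻¹ ^ 6 = 1 := by rw [← mul_pow, mul_inv_cancel₀ hw, one_pow]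
    have e : (rcB (Complex.I - z) + rcB z) * (1 - rcW z ^ 6)
        = - rcW z ^ 6 * (rcB (Complex.I - z) * (1 - (rcW z)⁻¹ ^ 6)) +
          rcB z * (1 - rcW z ^ 6) := by linear_combination -rcB (Complex.I - z) * hw6
    rw [e, h1, h2]
    field_simp
    ring) z
  linear_combination this

lemma rcB'_diff : Differentiable ℂ (deriv rcB) := by
  have := rcB_diff
  rw [← differentiableOn_univ] at this ⊢
  exact this.deriv isOpen_univ

lemma rcB'_add (z : ℂ) :
    deriv rcB (z + Complex.I) = deriv rcB z - 12 * π * Complex.I * z * rcE z := by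
  have h1 : HasDerivAt (fun z => rcB (z + Complex.I)) (deriv rcB (z + Complex.I)) z :=
    (rcB_diff (z + Complex.I)).hasDerivAt.comp_add_const z Complex.I
  have h2 := (rcB_diff z).hasDerivAt.sub (rcE_deriv z)
  have : (fun z => rcB (z + Complex.I)) = rcB - rcE := funext rcB_add
  rw [this] at h1
  exact h1.unique h2

lemma rcB'_sub (z : ℂ) : deriv rcB (Complex.I - z) = deriv rcB z := by
  have h1 : HasDerivAt (fun z => rcB (Complex.I - z)) (-deriv rcB (Complex.I - z)) z :=
    (rcB_diff (Complex.I - z)).hasDerivAt.comp_const_sub Complex.I z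
  have h2 := (rcB_diff z).hasDerivAt.neg
  have : (fun z => rcB (Complex.I - z)) = -rcB := funext rcB_sub
  rw [this] at h1
  exact neg_injective (h1.unique h2)

lemma rcB'_mul (z : ℂ) : deriv rcB z * rcd z + rcB z * (12 * π * rcW z ^ 6) =
    12 * π * Complex.I * z * rcE z + 2 * π * rcR (rcW z) := by
  have h1 := (rcB_diff z).hasDerivAt.mul (rcd_deriv z)
  have : rcB * rcd = rcn := funext rcB_mul
  rw [this] at h1
  exact h1.unique (rcn_deriv z)

lemma rcW_zero : rcW 0 = 1 := by simp [rcW]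
lemma rcE_zero : rcE 0 = 1 := by simp [rcE]
lemma rcd_zero : rcd 0 = 0 := by simp [rcd, rcW_zero]

lemma rcB_zero : rcB 0 = 1 / 2 := by
  have h := rcB'_mul 0
  rw [rcd_zero, rcW_zero] at h
  have hR : rcR 1 = 3 := by
    have hs := rcs_sq
    have hI := Complex.I_sq
    rw [rcR]
    grind
  rw [hR] at h
  have hpi := rcpi_ne
  have : (12 * π : ℂ) * (rcB 0 - 1 / 2) = 0 := by linear_combination h
  have := (mul_eq_zero.1 this).resolve_left (mul_ne_zero (by norm_num) hpi)
  linear_combination this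

lemma rcB'_zero : deriv rcB 0 = Complex.I / 2 - π / 6 * rcR2 1 + 3 * π := by
  have h6 := rcWpow_deriv 5 0
  norm_num only at h6
  have h1 := ((rcB'_diff 0).hasDerivAt.mul (rcd_deriv 0)).add
    ((rcB_diff 0).hasDerivAt.mul (h6.const_mul (12 * π : ℂ)))
  have h2 := (((hasDerivAt_id (0:ℂ)).const_mul (12 * π * Complex.I)).mul (rcE_deriv 0)).add
    ((rcR_deriv 0).const_mul (2 * π : ℂ))
  have h := h1.unique (h2.congr_of_eventuallyEq (Filter.Eventually.of_forall rcB'_mul))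
  simp only [rcd_zero, rcW_zero, rcE_zero, rcB_zero, id] at h
  have hpi := rcpi_ne
  have : (24 * π : ℂ) * (deriv rcB 0 - (Complex.I / 2 - π / 6 * rcR2 1 + 3 * π)) = 0 := by
    linear_combination h
  have := (mul_eq_zero.1 this).resolve_left (mul_ne_zero (by norm_num) hpi)
  linear_combination this

lemma rcc_re : (deriv rcB 0).re = π * (13 - 4 * √3) / 12 := by
  have hs3 : √3 ^ 2 = 3 := Real.sq_sqrt (by norm_num)
  have hR : rcR2 1 = ((23 + 4 * √3) / 2 : ℝ) + Complex.I * ((-(rcR2 1)).re * 0 + (rcR2 1).im : ℝ) := by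
    apply Complex.ext
    · simp [rcR2, rcs]
      nlinarith [hs3]
    · simp
  rw [rcB'_zero, hR]
  simp
  ring

noncomputable def rcN (z : ℂ) : ℂ := (deriv rcB z - deriv rcB 0) * rcW z
noncomputable def rcD (z : ℂ) : ℂ := 1 - rcW z
noncomputable def rcH : ℂ → ℂ := rcQ rcN rcD

lemma rcD_deriv (z : ℂ) : HasDerivAt rcD (2 * π * rcW z) z := by
  refine HasDerivAt.congr_deriv (f := rcD) ((rcW_deriv z).const_sub 1) ?_
  ring

lemma rcD_zero (z : ℂ) (h : rcD z = 0) : ∃ m : ℤ, z = m * Complex.I := by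
  have h1 : Complex.exp (-2 * π * z) = 1 := by
    have : rcW z = 1 := by rw [rcD] at h; linear_combination -h
    exact this
  obtain ⟨m, hm⟩ := Complex.exp_eq_one_iff.1 h1
  refine ⟨-m, ?_⟩
  have : (2 * π : ℂ) * (z - ((-m : ℤ) : ℂ) * Complex.I) = 0 := by
    push_cast; linear_combination -hm
  have := (mul_eq_zero.1 this).resolve_left (mul_ne_zero (by norm_num) rcpi_ne)
  linear_combination this

lemma rcB'_I : deriv rcB Complex.I = deriv rcB 0 := by
  have := rcB'_sub 0
  rwa [sub_zero] at this

lemma rcH_diff (z : ℂ) (h0 : 0 ≤ z.im) (h1 : z.im ≤ 1) : DifferentiableAt ℂ rcH z := by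
  refine rcQ_diff _ _ (fun z => ?_) (fun z => (rcD_deriv z).differentiableAt) z (fun h => ⟨?_, ?_⟩)
  · exact ((rcB'_diff z).sub_const _).mul (rcW_deriv z).differentiableAt
  · obtain ⟨m, hm⟩ := rcD_zero z h
    have him : z.im = m := by rw [hm]; simp
    rw [him] at h0 h1
    have h0' : 0 ≤ m := by exact_mod_cast h0
    have h1' : m ≤ 1 := by exact_mod_cast h1
    obtain rfl | rfl : m = 0 ∨ m = 1 := by omega
    · simp [hm, rcN]
    · simp [hm, rcN, rcB'_I]
  · rw [(rcD_deriv z).deriv]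
    exact mul_ne_zero (mul_ne_zero (by norm_num) rcpi_ne) (rcW_ne z)

lemma rcD_ne_re (z : ℂ) (h : z.re ≠ 0) : rcD z ≠ 0 := by
  intro h0
  obtain ⟨m, hm⟩ := rcD_zero z h0
  apply h; rw [hm]; simp

lemma rcD_ne_im (z : ℂ) (h : 0 < z.im) (h1 : z.im < 1) : rcD z ≠ 0 := by
  intro h0
  obtain ⟨m, hm⟩ := rcD_zero z h0
  have him : z.im = m := by rw [hm]; simp
  rw [him] at h h1
  have h0' : 0 < m := by exact_mod_cast h
  have h1' : m < 1 := by exact_mod_cast h1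
  omega

noncomputable def rcg (x : ℝ) : ℂ := x * rcE x / (Complex.exp (2 * π * x) - 1)

lemma rcH_bottom_top (x : ℝ) (hx : 0 < x) :
    rcH x - rcH (x + Complex.I) = 12 * π * Complex.I * rcg x := by
  have h1 : rcD x ≠ 0 := rcD_ne_re _ (by simpa using hx.ne')
  have h2 : rcD (x + Complex.I) ≠ 0 := rcD_ne_re _ (by simpa using hx.ne')
  have hw := rcW_ne x
  have hexp : Complex.exp (2 * π * x) = (rcW x)⁻¹ := by
    rw [rcW, ← Complex.exp_neg]; congr 1; ring
  rw [rcH, rcQ_of_ne _ _ _ h1, rcQ_of_ne _ _ _ h2, rcg, hexp]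
  simp only [rcN, rcD, rcW_add, rcB'_add] at h1 ⊢
  have h3 : (rcW x)⁻¹ - 1 = (1 - rcW x) / rcW x := by field_simp
  rw [h3]
  field_simp
  ring

lemma rcg_norm (x : ℝ) (hx : 0 < x) : ‖rcg x‖ ≤ 1 / (2 * π) * Real.exp (-π * x) := by
  have hE : ‖rcE x‖ = 1 := by
    rw [rcE, show (6 * π * Complex.I * (x:ℂ) ^ 2 : ℂ) = ((6 * π * x ^ 2 : ℝ) : ℂ) * Complex.I by
      push_cast; ring, Complex.norm_exp_ofReal_mul_I]
  have hd : Complex.exp (2 * π * x) - 1 = ((Real.exp (2 * π * x) - 1 : ℝ) : ℂ) := by push_cast; rfl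
  have hpx : 0 < π * x := by positivity
  have hlow : 2 * π * x * Real.exp (π * x) ≤ Real.exp (2 * π * x) - 1 := by
    have h1 : π * x + 1 ≤ Real.exp (π * x) := Real.add_one_le_exp _
    have h2 : -(π * x) + 1 ≤ Real.exp (-(π * x)) := Real.add_one_le_exp _
    have h3 : π * x ≤ Real.sinh (π * x) := Real.self_le_sinh_iff.2 hpx.le
    rw [Real.sinh_eq] at h3
    have e1 : Real.exp (2 * π * x) = Real.exp (π * x) * Real.exp (π * x) := by
      rw [← Real.exp_add]; congr 1; ring
    have e2 : Real.exp (π * x) * Real.exp (-(π * x)) = 1 := by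
      rw [← Real.exp_add]; simp
    have := mul_le_mul_of_nonneg_left h3 (Real.exp_pos (π * x)).le
    nlinarith
  have hpos : 0 < 2 * π * x * Real.exp (π * x) := by positivity
  rw [rcg, norm_div, norm_mul, hE, hd, Complex.norm_real, Complex.norm_real, Real.norm_eq_abs,
    Real.norm_eq_abs, abs_of_pos hx, abs_of_pos (lt_of_lt_of_le hpos hlow), mul_one]
  calc x / (Real.exp (2 * π * x) - 1) ≤ x / (2 * π * x * Real.exp (π * x)) := by gcongr
    _ = _ := by
      rw [show -π * x = -(π * x) by ring, Real.exp_neg]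
      field_simp

lemma rcE_cont : Continuous rcE := continuous_iff_continuousAt.2 fun z => (rcE_deriv z).continuousAt

lemma rcg_int : IntegrableOn rcg (Ioi 0) := by
  have hi : IntegrableOn (fun x : ℝ => 1 / (2 * π) * Real.exp (-π * x)) (Ioi 0) :=
    (integrableOn_exp_mul_Ioi (by linarith [Real.pi_pos]) 0).const_mul _
  refine Integrable.mono' hi ?_ ?_
  · have hE := rcE_cont.measurable
    have : Measurable rcg := by unfold rcg; fun_prop
    exact this.aestronglyMeasurable
  · filter_upwards [ae_restrict_mem measurableSet_Ioi] with x hx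
    exact rcg_norm x hx

lemma rcW_norm (z : ℂ) : ‖rcW z‖ = Real.exp (-2 * π * z.re) := by
  rw [rcW, Complex.norm_exp]; congr 1; simp

lemma rcE_norm (z : ℂ) : ‖rcE z‖ = Real.exp (-12 * π * z.re * z.im) := by
  rw [rcE, Complex.norm_exp]; congr 1; simp [pow_two]; ring

lemma rc_exp_half (T : ℝ) (hT : 1 ≤ T) : Real.exp (-2 * π * T) ≤ 1 / 2 := by
  have : Real.exp (-2 * π * T) ≤ Real.exp (-1) := by
    apply Real.exp_le_exp.2; nlinarith [Real.pi_gt_three]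
  have h2 : (2:ℝ) ≤ Real.exp 1 := by have := Real.add_one_le_exp (1:ℝ); linarith
  rw [Real.exp_neg] at this
  calc _ ≤ _ := this
    _ ≤ 1 / 2 := by rw [one_div]; gcongr

lemma rcH_bound : ∃ C : ℝ, ∀ T y : ℝ, 1 ≤ T → 0 ≤ y → y ≤ 1 →
    ‖rcH (T + y * Complex.I)‖ ≤ C * Real.exp (-T) := by
  have hPc : Continuous rcP := by unfold rcP; fun_prop
  have hRc : Continuous rcR := by unfold rcR; fun_prop
  obtain ⟨K, hK⟩ := (isCompact_closedBall (0:ℂ) 1).exists_bound_of_continuousOn hPc.continuousOn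
  obtain ⟨L, hL⟩ := (isCompact_closedBall (0:ℂ) 1).exists_bound_of_continuousOn hRc.continuousOn
  have hK0 : 0 ≤ K := (norm_nonneg _).trans (hK 0 (by simp))
  have hL0 : 0 ≤ L := (norm_nonneg _).trans (hL 0 (by simp))
  have hpi := Real.pi_pos
  set c := deriv rcB 0 with hc
  set M := 2 * (12 * π + 2 * π * L + 2 * (1 + K) * (12 * π)) with hM
  refine ⟨2 * (M + ‖c‖), fun T y hT hy0 hy1 => ?_⟩
  set z : ℂ := T + y * Complex.I with hz
  have hre : z.re = T := by simp [hz]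
  have him : z.im = y := by simp [hz]
  have hhalf := rc_exp_half T hT
  have hW : ‖rcW z‖ = Real.exp (-2 * π * T) := by rw [rcW_norm, hre]
  have hW1 : ‖rcW z‖ ≤ 1 / 2 := by rw [hW]; exact hhalf
  have hWm : rcW z ∈ Metric.closedBall (0:ℂ) 1 := by simp; linarith
  have hE : ‖rcE z‖ ≤ 1 := by
    rw [rcE_norm, hre, him, Real.exp_le_one_iff]
    have : 0 ≤ π * T * y := by positivity
    linarith
  have hW6 : ‖rcW z ^ 6‖ ≤ 1 / 2 := by
    rw [norm_pow]
    calc ‖rcW z‖ ^ 6 ≤ (1 / 2) ^ 6 := by gcongr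
      _ ≤ 1 / 2 := by norm_num
  have hd : 1 / 2 ≤ ‖rcd z‖ := by
    have := norm_sub_norm_le (1:ℂ) (rcW z ^ 6)
    rw [norm_one] at this
    rw [rcd]; linarith
  have hD : 1 / 2 ≤ ‖rcD z‖ := by
    have := norm_sub_norm_le (1:ℂ) (rcW z)
    rw [norm_one] at this
    rw [rcD]; linarith
  have hzn : ‖z‖ ≤ T + 1 := by
    calc ‖z‖ ≤ ‖(T:ℂ)‖ + ‖(y * Complex.I : ℂ)‖ := norm_add_le _ _
      _ ≤ T + 1 := by
        simp only [norm_mul, Complex.norm_real, Complex.norm_I, Real.norm_eq_abs, mul_one]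
        rw [abs_of_nonneg hy0, abs_of_nonneg (by linarith)]
        linarith
  have hB : ‖rcB z‖ ≤ 2 * (1 + K) := by
    have h1 : ‖rcB z‖ * ‖rcd z‖ ≤ 1 + K := by
      rw [← norm_mul, rcB_mul, rcn]
      exact (norm_sub_le _ _).trans (add_le_add hE (hK _ hWm))
    nlinarith [norm_nonneg (rcB z)]
  have hpn : ‖(π : ℂ)‖ = π := by simp [abs_of_pos hpi]
  have hB' : ‖deriv rcB z‖ ≤ M * (T + 1) := by
    have e : deriv rcB z * rcd z = 12 * π * Complex.I * z * rcE z + 2 * π * rcR (rcW z)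
        - rcB z * (12 * π * rcW z ^ 6) := by linear_combination rcB'_mul z
    have h1 : ‖deriv rcB z‖ * ‖rcd z‖ ≤ 12 * π * (T + 1) + 2 * π * L + 2 * (1 + K) * (12 * π) := by
      rw [← norm_mul, e]
      refine (norm_sub_le _ _).trans (add_le_add ((norm_add_le _ _).trans (add_le_add ?_ ?_)) ?_)
      · simp only [norm_mul, hpn, Complex.norm_I, Complex.norm_ofNat, mul_one]
        calc 12 * π * ‖z‖ * ‖rcE z‖ ≤ 12 * π * (T + 1) * 1 := by gcongr
          _ = _ := by ring
      · simp only [norm_mul, hpn, Complex.norm_ofNat]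
        have := hL _ hWm
        gcongr
      · rw [norm_mul, norm_mul, norm_mul, hpn, Complex.norm_ofNat]
        calc ‖rcB z‖ * (12 * π * ‖rcW z ^ 6‖) ≤ (2 * (1 + K)) * (12 * π * 1) := by
              gcongr; linarith
          _ = _ := by ring
    have h2 : ‖deriv rcB z‖ * (1 / 2) ≤ ‖deriv rcB z‖ * ‖rcd z‖ := by gcongr
    have h3 : 0 ≤ 2 * π * L + 2 * (1 + K) * (12 * π) := by positivity
    have h4 : 0 ≤ (2 * π * L + 2 * (1 + K) * (12 * π)) * T := mul_nonneg h3 (by linarith)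
    rw [hM]
    linarith
  have hDne : rcD z ≠ 0 := by
    intro h; rw [h, norm_zero] at hD; norm_num at hD
  rw [rcH, rcQ_of_ne _ _ _ hDne, norm_div, rcN, norm_mul, hW, ← hc]
  have hM0 : 0 ≤ M := by rw [hM]; positivity
  have hTe : T + 1 ≤ Real.exp T := Real.add_one_le_exp T
  have hnum : ‖deriv rcB z - c‖ ≤ (M + ‖c‖) * Real.exp T := by
    have h1 := norm_sub_le (deriv rcB z) c
    have h2 : M * (T + 1) ≤ M * Real.exp T := by gcongr
    have h3 : ‖c‖ * 1 ≤ ‖c‖ * Real.exp T := by gcongr; linarith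
    linarith
  calc ‖deriv rcB z - c‖ * Real.exp (-2 * π * T) / ‖rcD z‖
      ≤ ((M + ‖c‖) * Real.exp T) * Real.exp (-2 * T) / (1 / 2) := by
        gcongr
        nlinarith [Real.pi_gt_three]
    _ = 2 * (M + ‖c‖) * (Real.exp T * Real.exp (-2 * T)) := by ring
    _ = _ := by rw [← Real.exp_add]; congr 2; ring

lemma rc_rect (T : ℝ) (hT : 0 ≤ T) :
    12 * π * Complex.I * (∫ x in (0:ℝ)..T, rcg x)
      + Complex.I * (∫ y in (0:ℝ)..1, rcH (T + y * Complex.I))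
      - Complex.I * (∫ y in (0:ℝ)..1, rcH (y * Complex.I)) = 0 := by
  have h := Complex.integral_boundary_rect_eq_zero_of_differentiableOn rcH 0 (T + Complex.I)
    (fun z hz => by
      rw [Complex.mem_reProdIm] at hz
      have := hz.2
      simp at this
      exact (rcH_diff z this.1 this.2).differentiableWithinAt)
  simp only [Complex.zero_re, Complex.zero_im, Complex.add_re, Complex.add_im, Complex.ofReal_re,
    Complex.ofReal_im, Complex.I_re, Complex.I_im, add_zero, zero_add, Complex.ofReal_zero,
    zero_mul, Complex.ofReal_one, one_mul, smul_eq_mul] at h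
  rw [← h, ← intervalIntegral.integral_const_mul, ← intervalIntegral.integral_sub]
  · congr 2
    apply intervalIntegral.integral_congr_ae
    filter_upwards with x hx
    rw [uIoc_of_le hT] at hx
    exact (rcH_bottom_top x hx.1).symm
  · apply Continuous.intervalIntegrable
    rw [continuous_iff_continuousAt]
    intro x
    exact ContinuousAt.comp (f := fun x : ℝ => (x : ℂ)) (g := rcH)
      (rcH_diff _ (by simp) (by simp)).continuousAt (by fun_prop)
  · apply Continuous.intervalIntegrable
    rw [continuous_iff_continuousAt]
    intro x
    exact ContinuousAt.comp (f := fun x : ℝ => (x + Complex.I : ℂ)) (g := rcH)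
      (rcH_diff _ (by simp) (by simp)).continuousAt (by fun_prop)

lemma rc_limit : 12 * π * (∫ x in Ioi (0:ℝ), rcg x) = ∫ y in (0:ℝ)..1, rcH (y * Complex.I) := by
  obtain ⟨C, hC⟩ := rcH_bound
  have h1 := intervalIntegral_tendsto_integral_Ioi (0:ℝ) rcg_int Filter.tendsto_id
  have h2 : Filter.Tendsto (fun T : ℝ => ∫ y in (0:ℝ)..1, rcH (T + y * Complex.I))
      Filter.atTop (nhds 0) := by
    have h3 : Filter.Tendsto (fun T : ℝ => C * Real.exp (-T)) Filter.atTop (nhds 0) := by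
      simpa using (Real.tendsto_exp_neg_atTop_nhds_zero).const_mul C
    refine squeeze_zero_norm' ?_ h3
    filter_upwards [Filter.eventually_ge_atTop 1] with T hT
    have := intervalIntegral.norm_integral_le_of_norm_le_const (a := (0:ℝ)) (b := 1)
      (f := fun y : ℝ => rcH (T + y * Complex.I)) (C := C * Real.exp (-T)) (fun y hy => by
        rw [uIoc_of_le zero_le_one] at hy
        exact hC T y hT hy.1.le hy.2)
    simpa using this
  have h4 := ((h1.const_mul (12 * π * Complex.I)).add (h2.const_mul Complex.I)).sub_const
    (Complex.I * (∫ y in (0:ℝ)..1, rcH (y * Complex.I)))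
  have h5 := tendsto_nhds_unique h4 (tendsto_const_nhds.congr' (by
    filter_upwards [Filter.eventually_ge_atTop 0] with T hT
    exact (rc_rect T hT).symm))
  have : Complex.I * (12 * π * (∫ x in Ioi (0:ℝ), rcg x)
    - ∫ y in (0:ℝ)..1, rcH (y * Complex.I)) = 0 := by linear_combination h5
  exact sub_eq_zero.1 ((mul_eq_zero.1 this).resolve_left Complex.I_ne_zero)

lemma rcH_symm (y : ℝ) (h0 : 0 < y) (h1 : y < 1) :
    rcH (y * Complex.I) + rcH ((1 - y : ℝ) * Complex.I)
      = deriv rcB 0 - deriv rcB (y * Complex.I) := by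
  have e : ((1 - y : ℝ) * Complex.I : ℂ) = Complex.I - y * Complex.I := by push_cast; ring
  have n1 : rcD (y * Complex.I) ≠ 0 := rcD_ne_im _ (by simpa using h0) (by simpa using h1)
  have n2 : rcD ((1 - y : ℝ) * Complex.I) ≠ 0 :=
    rcD_ne_im _ (by simpa using h1) (by simpa using h0)
  rw [rcH, rcQ_of_ne _ _ _ n1, rcQ_of_ne _ _ _ n2]
  rw [e] at *
  have hw := rcW_ne (y * Complex.I)
  simp only [rcN, rcD, rcW_sub, rcB'_sub] at *
  have h3 : 1 - (rcW (y * Complex.I))⁻¹ = -(1 - rcW (y * Complex.I)) / rcW (y * Complex.I) := by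
    field_simp; ring
  rw [h3]
  field_simp
  ring

lemma rcH_contI : ContinuousOn (fun y : ℝ => rcH (y * Complex.I)) (uIcc 0 1) := by
  intro y hy
  rw [uIcc_of_le zero_le_one] at hy
  apply ContinuousAt.continuousWithinAt
  exact ContinuousAt.comp (f := fun y : ℝ => (y * Complex.I : ℂ)) (g := rcH)
      (rcH_diff _ (by simpa using hy.1) (by simpa using hy.2)).continuousAt (by fun_prop)

lemma rcH_integral : ∫ y in (0:ℝ)..1, rcH (y * Complex.I) = deriv rcB 0 / 2 - Complex.I / 2 := by
  have h1 : ∫ y in (0:ℝ)..1, rcH ((1 - y : ℝ) * Complex.I) = ∫ y in (0:ℝ)..1, rcH (y * Complex.I) := by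
    have := intervalIntegral.integral_comp_sub_left (a := (0:ℝ)) (b := 1)
      (fun y : ℝ => rcH (y * Complex.I)) 1
    simpa using this
  have i1 : IntervalIntegrable (fun y : ℝ => rcH (y * Complex.I)) volume 0 1 :=
    rcH_contI.intervalIntegrable
  have i2 : IntervalIntegrable (fun y : ℝ => rcH ((1 - y : ℝ) * Complex.I)) volume 0 1 := by
    have := (i1.comp_sub_left 1).symm
    simpa using this
  have h2 : (∫ y in (0:ℝ)..1, rcH (y * Complex.I)) + ∫ y in (0:ℝ)..1, rcH ((1 - y : ℝ) * Complex.I)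
      = ∫ y in (0:ℝ)..1, (deriv rcB 0 - deriv rcB (y * Complex.I)) := by
    rw [← intervalIntegral.integral_add i1 i2]
    apply intervalIntegral.integral_congr_ae
    have : ∀ᵐ y : ℝ, y ≠ 1 := by simp [ae_iff]
    filter_upwards [this] with y hy1 hy
    rw [uIoc_of_le zero_le_one] at hy
    exact rcH_symm y hy.1 (lt_of_le_of_ne hy.2 hy1)
  have hB'c := rcB'_diff.continuous
  have h3 : ∫ y in (0:ℝ)..1, (deriv rcB 0 - deriv rcB (y * Complex.I))
      = (deriv rcB 0 * (1:ℝ) + Complex.I * rcB ((1:ℝ) * Complex.I))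
        - (deriv rcB 0 * (0:ℝ) + Complex.I * rcB ((0:ℝ) * Complex.I)) := by
    refine intervalIntegral.integral_eq_sub_of_hasDerivAt
      (f := fun y : ℝ => deriv rcB 0 * (y:ℂ) + Complex.I * rcB (y * Complex.I)) (fun y _ => ?_) ?_
    · have a1 : HasDerivAt (fun y : ℝ => (y : ℂ)) 1 y := Complex.ofRealCLM.hasDerivAt
      have a2 : HasDerivAt (fun y : ℝ => rcB (y * Complex.I))
          (deriv rcB (y * Complex.I) * (1 * Complex.I)) y :=
        (rcB_diff (y * Complex.I)).hasDerivAt.comp y (a1.mul_const Complex.I)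
      refine ((a1.const_mul (deriv rcB 0)).add (a2.const_mul Complex.I)).congr_deriv ?_
      linear_combination deriv rcB (y * Complex.I) * Complex.I_sq
    · apply Continuous.intervalIntegrable
      fun_prop
  have hBI : rcB Complex.I = -(1 / 2) := by
    have := rcB_sub 0
    rwa [sub_zero, rcB_zero] at this
  simp only [Complex.ofReal_one, one_mul, Complex.ofReal_zero, zero_mul, hBI, rcB_zero] at h3
  rw [h1, h3] at h2
  linear_combination h2 / 2

lemma rcg_value : 2 * (∫ x in Ioi (0:ℝ), rcg x).re = (13 - 4 * √3) / 144 := by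
  have h := rc_limit
  rw [rcH_integral] at h
  have h2 := congrArg Complex.re h
  have e : (12 * π * (∫ x in Ioi (0:ℝ), rcg x) : ℂ).re = 12 * π * (∫ x in Ioi (0:ℝ), rcg x).re := by
    rw [show (12 * π : ℂ) = ((12 * π : ℝ) : ℂ) by push_cast; rfl, Complex.re_ofReal_mul]
  rw [e] at h2
  simp [rcc_re] at h2
  have hpi := Real.pi_pos
  have : π * (2 * (∫ x in Ioi (0:ℝ), rcg x).re) = π * ((13 - 4 * √3) / 144) := by linarith
  exact mul_left_cancel₀ hpi.ne' this

lemma rcg_re (x : ℝ) : (rcg x).re = x * Real.cos (6 * π * x ^ 2) / (Real.exp (2 * π * x) - 1) := by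
  have hd : Complex.exp (2 * π * x) - 1 = ((Real.exp (2 * π * x) - 1 : ℝ) : ℂ) := by push_cast; rfl
  have hE : (rcE x).re = Real.cos (6 * π * x ^ 2) := by
    rw [rcE, show (6 * π * Complex.I * (x:ℂ) ^ 2 : ℂ) = ((6 * π * x ^ 2 : ℝ) : ℂ) * Complex.I by
      push_cast; ring, Complex.exp_ofReal_mul_I_re]
  rw [rcg, hd, Complex.div_ofReal_re, Complex.re_ofReal_mul, hE]

/-- Ramanujan's integral `R_C(0, 6)` converges and equals `(13 - 4√3)/144`. -/
theorem ramanujan_RC_zero_six :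
    IntegrableOn
      (fun x : ℝ => Real.cos (6 * π * x) / (Real.exp (2 * π * Real.sqrt x) - 1)) (Ioi 0) ∧
    (∫ x in Ioi (0:ℝ), Real.cos (6 * π * x) / (Real.exp (2 * π * Real.sqrt x) - 1)) =
      (13 - 4 * Real.sqrt 3) / 144 := by
  set f : ℝ → ℝ := fun x : ℝ => Real.cos (6 * π * x) / (Real.exp (2 * π * Real.sqrt x) - 1) with hf
  have key : ∀ x ∈ Ioi (0:ℝ), ((2:ℝ) * x ^ ((2:ℝ) - 1)) • f (x ^ (2:ℝ)) = 2 * (rcg x).re := by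
    intro x hx
    have hx' : (0:ℝ) < x := hx
    rw [rcg_re, show (2:ℝ) - 1 = 1 by norm_num, Real.rpow_one, Real.rpow_two, hf]
    simp only [smul_eq_mul]
    rw [Real.sqrt_sq hx'.le]
    ring
  have hint : IntegrableOn (fun x => 2 * (rcg x).re) (Ioi 0) := (rcg_int.re).const_mul 2
  constructor
  · rw [← integrableOn_Ioi_comp_rpow_iff f (p := 2) (by norm_num)]
    refine hint.congr_fun (fun x hx => ?_) measurableSet_Ioi
    rw [abs_of_pos (by norm_num : (0:ℝ) < 2)]
    exact (key x hx).symm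
  · rw [← integral_comp_rpow_Ioi_of_pos (g := f) (p := 2) (by norm_num),
      setIntegral_congr_fun measurableSet_Ioi key, integral_const_mul, ← rcg_value]
    congr 1
    exact integral_re rcg_int
end
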